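/- arXiv:math/0607638 — 3 statements merged into one kernel-verified Lean document; each statement's English description precedes it below -/
import Mathlib

section
/- Let k be an algebraically closed field of characteristic zero, and let t_1,…,t_r be nonnegative integers with t_1+⋯+t_r = m+1 and each t_i ≤ m+1. Set P = P(m;t_1,…,t_r). Then the length of the R_P-module (R/J_m)_P (i.e., the multiplicity of the m-th jet scheme of X along the component defined by P) equals (m+1)!/(t_1!⋯t_r!). -/
/-- The polynomial ring `R = k[x_i^(j) : 1 ≤ i ≤ n, 0 ≤ j ≤ m]` in `n(m+1)` variables;
the variable `x_i^(j)` is `MvPolynomial.X (i, j)`. -/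
abbrev JetRing (k : Type*) [Field k] (m n : ℕ) : Type _ :=
  MvPolynomial (Fin n × Fin (m + 1)) k

/-- `jetGen k m n r hrn j` is the generator `g_j`, i.e. the coefficient of `t^j` in the
product `∏_{i=1}^{r} (x_i^(0) + x_i^(1) t + ⋯ + x_i^(m) t^m)`. -/
noncomputable def jetGen (k : Type*) [Field k] (m n r : ℕ) (hrn : r ≤ n) (j : ℕ) :
    JetRing k m n :=
  Polynomial.coeff
    (∏ i : Fin r, ∑ l : Fin (m + 1),
      Polynomial.C (MvPolynomial.X (Fin.castLE hrn i, l)) * Polynomial.X ^ (l : ℕ)) j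

/-- The ideal `J_m = (g_0, …, g_m)` defining the `m`-th jet scheme of `x_1 ⋯ x_r = 0`. -/
noncomputable def jetIdeal (k : Type*) [Field k] (m n r : ℕ) (hrn : r ≤ n) :
    Ideal (JetRing k m n) :=
  Ideal.span (jetGen k m n r hrn '' Set.Iic m)

/-- The ideal `P(m; t_1, …, t_r) = (x_i^(j) : 1 ≤ i ≤ r, 0 ≤ j ≤ t_i - 1)`. -/
noncomputable def compPrime (k : Type*) [Field k] (m n r : ℕ) (hrn : r ≤ n)
    (t : Fin r → ℕ) : Ideal (JetRing k m n) :=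
  Ideal.span {p | ∃ (i : Fin r) (j : Fin (m + 1)), (j : ℕ) < t i ∧
    p = MvPolynomial.X (Fin.castLE hrn i, j)}

/-- The length of a module, valued in `ℕ∞`: the supremum of lengths of strictly
increasing chains of submodules. -/
noncomputable def moduleLength (R M : Type*) [Ring R] [AddCommGroup M] [Module R M] : ℕ∞ :=
  Order.height (⊤ : Submodule R M)

open Polynomial in
/-- A monic polynomial `p` of degree `n` splits into linear factors, universally, over an extension
which is free of rank `n!`. -/
theorem Polynomial.Monic.exists_universal_splitting.{u} (n : ℕ) :
    ∀ {B : Type u} [CommRing B] (p : B[X]), p.Monic → p.natDegree = n →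
      ∃ (T : Type u) (_ : CommRing T) (_ : Algebra B T) (c : Fin n → T),
        Nonempty (Module.Basis (Fin n.factorial) B T) ∧
        p.map (algebraMap B T) = ∏ j, (X - C (c j)) ∧
        (∀ {D : Type u} [CommRing D] (φ : B →+* D) (d : Fin n → D),
          p.map φ = ∏ j, (X - C (d j)) →
          ∃ ψ : T →+* D, ψ.comp (algebraMap B T) = φ ∧ ∀ j, ψ (c j) = d j) ∧
        (∀ {D : Type u} [CommRing D] (ψ₁ ψ₂ : T →+* D),
          ψ₁.comp (algebraMap B T) = ψ₂.comp (algebraMap B T) →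
          (∀ j, ψ₁ (c j) = ψ₂ (c j)) → ψ₁ = ψ₂) := by
  induction n with
  | zero =>
    intro B _ p hp hn
    obtain rfl : p = 1 := (hp.natDegree_eq_zero).mp hn
    refine ⟨B, inferInstance, Algebra.id B, Fin.elim0, ⟨Module.Basis.singleton (Fin 1) B⟩,
      by simp, ?_, ?_⟩
    · intro D _ φ d _
      exact ⟨φ, by ext; simp, fun j => j.elim0⟩
    · intro D _ ψ₁ ψ₂ h _
      ext x
      exact DFunLike.congr_fun h x
  | succ n ih =>
    intro B _ p hp hn
    let b : Module.Basis (Fin (n + 1)) B (AdjoinRoot p) :=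
      (AdjoinRoot.powerBasisAux' hp).reindex (finCongr hn)
    have hB : Nontrivial B := by
      by_contra h
      rw [not_nontrivial_iff_subsingleton] at h
      have : p = 0 := Subsingleton.elim _ _
      simp [this] at hn
    have hB' : Nontrivial (AdjoinRoot p) := b.repr.toEquiv.nontrivial
    set q := p.map (AdjoinRoot.of p) /ₘ (X - C (AdjoinRoot.root p)) with hq
    have hq' : (X - C (AdjoinRoot.root p)) * q = p.map (AdjoinRoot.of p) :=
      mul_divByMonic_eq_iff_isRoot.mpr (AdjoinRoot.isRoot_root p)
    have hqm : q.Monic := (monic_X_sub_C _).of_mul_monic_left (hq' ▸ hp.map _)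
    have hqn : q.natDegree = n := by
      rw [hq, natDegree_divByMonic _ (monic_X_sub_C _), hp.natDegree_map, hn, natDegree_X_sub_C]
      rfl
    obtain ⟨T, _, _, c, ⟨bT⟩, hc, hex, hext⟩ := ih q hqm hqn
    let _ : Algebra B T := ((algebraMap (AdjoinRoot p) T).comp (AdjoinRoot.of p)).toAlgebra
    have : IsScalarTower B (AdjoinRoot p) T := IsScalarTower.of_algebraMap_eq' rfl
    have hcomp : algebraMap B T = (algebraMap (AdjoinRoot p) T).comp (AdjoinRoot.of p) := rfl
    refine ⟨T, inferInstance, inferInstance,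
      Fin.cons (algebraMap (AdjoinRoot p) T (AdjoinRoot.root p)) c,
      ⟨(b.smulTower bT).reindex finProdFinEquiv⟩, ?_, ?_, ?_⟩
    · rw [hcomp, ← Polynomial.map_map, ← hq', Polynomial.map_mul, hc, Fin.prod_univ_succ]
      simp
    · intro D _ φ d hd
      have hroot : p.eval₂ φ (d 0) = 0 := by
        rw [← eval_map, hd, Fin.prod_univ_succ]
        simp
      let φ₁ := AdjoinRoot.lift φ (d 0) hroot
      have hφ₁ : φ₁.comp (AdjoinRoot.of p) = φ := by ext; simp [φ₁]
      have hq₁ : q.map φ₁ = ∏ j : Fin n, (X - C (d j.succ)) := by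
        apply (monic_X_sub_C (d 0)).isRegular.left
        have := congrArg (Polynomial.map φ₁) hq'
        rw [Polynomial.map_map, hφ₁, hd, Fin.prod_univ_succ] at this
        simpa [φ₁] using this
      obtain ⟨ψ, hψ, hψc⟩ := hex φ₁ _ hq₁
      refine ⟨ψ, by rw [hcomp, ← RingHom.comp_assoc, hψ, hφ₁], fun j => ?_⟩
      refine Fin.cases ?_ (fun j => ?_) j
      · simpa [φ₁] using DFunLike.congr_fun hψ (AdjoinRoot.root p)
      · simpa using hψc j
    · intro D _ ψ₁ ψ₂ h hcj
      refine hext ψ₁ ψ₂ (AdjoinRoot.ringHom_ext ?_ ?_) fun j => by simpa using hcj j.succ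
      · rw [RingHom.comp_assoc, RingHom.comp_assoc, ← hcomp, h]
      · simpa using hcj 0

open Polynomial in
/-- A finite family of monic polynomials `f i` of degree `t i` splits into linear factors,
universally, over an extension which is free of rank `∏ (t i)!`. -/
theorem Polynomial.exists_universal_splitting_family.{u} (r : ℕ) :
    ∀ {B : Type u} [CommRing B] (t : Fin r → ℕ) (f : Fin r → B[X]), (∀ i, (f i).Monic) →
      (∀ i, (f i).natDegree = t i) →
      ∃ (T : Type u) (_ : CommRing T) (_ : Algebra B T) (c : ∀ i, Fin (t i) → T),
        Nonempty (Module.Basis (Fin (∏ i, (t i).factorial)) B T) ∧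
        (∀ i, (f i).map (algebraMap B T) = ∏ j, (X - C (c i j))) ∧
        (∀ {D : Type u} [CommRing D] (φ : B →+* D) (d : ∀ i, Fin (t i) → D),
          (∀ i, (f i).map φ = ∏ j, (X - C (d i j))) →
          ∃ ψ : T →+* D, ψ.comp (algebraMap B T) = φ ∧ ∀ i j, ψ (c i j) = d i j) ∧
        (∀ {D : Type u} [CommRing D] (ψ₁ ψ₂ : T →+* D),
          ψ₁.comp (algebraMap B T) = ψ₂.comp (algebraMap B T) →
          (∀ i j, ψ₁ (c i j) = ψ₂ (c i j)) → ψ₁ = ψ₂) := by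
  induction r with
  | zero =>
    intro B _ t f _ _
    refine ⟨B, inferInstance, Algebra.id B, fun i => i.elim0,
      ⟨(Module.Basis.singleton (Fin 1) B).reindex (finCongr (by simp))⟩,
      fun i => i.elim0, ?_, ?_⟩
    · intro D _ φ d _
      exact ⟨φ, by ext; simp, fun j => j.elim0⟩
    · intro D _ ψ₁ ψ₂ h _
      ext x
      exact DFunLike.congr_fun h x
  | succ r ih =>
    intro B _ t f hf hn
    obtain ⟨T₁, _, _, c₁, ⟨b₁⟩, hc₁, hex₁, hext₁⟩ :=
      Monic.exists_universal_splitting (t 0) (f 0) (hf 0) (hn 0)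
    rcases subsingleton_or_nontrivial T₁ with hT | hT
    · have hB : Subsingleton B := by
        have : Nonempty (Fin (t 0).factorial) := ⟨0, Nat.factorial_pos _⟩
        by_contra h
        rw [not_subsingleton_iff_nontrivial] at h
        exact not_subsingleton_iff_nontrivial.mpr b₁.repr.toEquiv.nontrivial hT
      have ht : ∀ i, t i = 0 := fun i => by rw [← hn i, Subsingleton.elim (f i) 0, natDegree_zero]
      refine ⟨B, inferInstance, Algebra.id B, fun i j => (finCongr (ht i) j).elim0,
        ⟨(Module.Basis.singleton (Fin 1) B).reindex (finCongr (by simp [ht]))⟩,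
        fun i => Subsingleton.elim _ _, ?_, ?_⟩
      · intro D _ φ d _
        exact ⟨φ, by ext; simp, fun i j => (finCongr (ht i) j).elim0⟩
      · intro D _ ψ₁ ψ₂ h _
        ext x
        exact DFunLike.congr_fun h x
    obtain ⟨T, _, _, c, ⟨b⟩, hc, hex, hext⟩ :=
      ih (B := T₁) (fun i => t i.succ) (fun i => (f i.succ).map (algebraMap B T₁))
        (fun i => (hf _).map _) (fun i => by rw [(hf _).natDegree_map, hn])
    let _ : Algebra B T := ((algebraMap T₁ T).comp (algebraMap B T₁)).toAlgebra
    have : IsScalarTower B T₁ T := IsScalarTower.of_algebraMap_eq' rfl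
    have hcomp : algebraMap B T = (algebraMap T₁ T).comp (algebraMap B T₁) := rfl
    refine ⟨T, inferInstance, inferInstance,
      Fin.cons (fun j => algebraMap T₁ T (c₁ j)) c,
      ⟨((b₁.smulTower b).reindex finProdFinEquiv).reindex
        (finCongr (Fin.prod_univ_succ fun i => (t i).factorial).symm)⟩, fun i => ?_, ?_, ?_⟩
    · refine Fin.cases ?_ (fun i => ?_) i
      · rw [hcomp, ← Polynomial.map_map, hc₁, Polynomial.map_prod]
        simp
      · rw [hcomp, ← Polynomial.map_map, hc]
        simp
    · intro D _ φ d hd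
      obtain ⟨φ₁, hφ₁, hφc⟩ := hex₁ φ _ (hd 0)
      obtain ⟨ψ, hψ, hψc⟩ := hex φ₁ (fun i => d i.succ)
        (fun i => by rw [Polynomial.map_map, hφ₁, hd])
      refine ⟨ψ, by rw [hcomp, ← RingHom.comp_assoc, hψ, hφ₁], fun i => ?_⟩
      refine Fin.cases (fun j => ?_) (fun i => ?_) i
      · rw [← hφc, ← hψ]
        simp
      · simpa using hψc i
    · intro D _ ψ₁ ψ₂ h hcj
      refine hext ψ₁ ψ₂ (hext₁ _ _ ?_ fun j => ?_) fun i j => by simpa using hcj i.succ j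
      · rw [RingHom.comp_assoc, RingHom.comp_assoc, ← hcomp, h]
      · simpa using hcj 0 j

open Polynomial in
theorem Polynomial.mem_map_C_iff_map_mk_eq_zero {A : Type*} [CommRing A] {I : Ideal A} {q : A[X]} :
    q ∈ I.map C ↔ q.map (Ideal.Quotient.mk I) = 0 := by
  simp [Ideal.mem_map_C_iff, Polynomial.ext_iff, Ideal.Quotient.eq_zero_iff_mem]

open Polynomial in
/-- Hensel's lemma along a nilpotent ideal: a factorization into coprime factors, one of them monic,
lifts from `A / I` to `A`. -/
theorem Polynomial.exists_monic_factor_of_isNilpotent {A : Type*} [CommRing A] {I : Ideal A}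
    (hI : IsNilpotent I) {p g h : A[X]} (hg : g.Monic) (hgh : IsCoprime g h)
    (hp : p - g * h ∈ I.map C) :
    ∃ g' h' : A[X], g'.Monic ∧ g'.natDegree = g.natDegree ∧ g' - g ∈ I.map C ∧
      h' - h ∈ I.map C ∧ p = g' * h' := by
  nontriviality A
  obtain ⟨N, hN⟩ := hI
  have key : ∀ n : ℕ, ∃ g' h' : A[X], g'.Monic ∧ g'.natDegree = g.natDegree ∧
      g' - g ∈ I.map C ∧ h' - h ∈ I.map C ∧ p - g' * h' ∈ (I ^ (n + 1)).map C := by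
    intro n
    induction n with
    | zero => exact ⟨g, h, hg, rfl, by simp, by simp, by simpa using hp⟩
    | succ n ih =>
      obtain ⟨g', h', hg', hdeg, hgg, hhh, he⟩ := ih
      obtain ⟨a, b, hab⟩ := hgh
      set e := p - g' * h' with he_def
      have hle : (I ^ (n + 1)).map (C : A →+* A[X]) ≤ I.map C :=
        Ideal.map_mono (Ideal.pow_le_self (by omega))
      have hbe : b * e ∈ (I ^ (n + 1)).map C := Ideal.mul_mem_left _ _ he
      rw [mem_map_C_iff_map_mk_eq_zero] at hbe
      have hδ : (b * e) %ₘ g' ∈ (I ^ (n + 1)).map C := by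
        rw [mem_map_C_iff_map_mk_eq_zero, map_modByMonic _ hg', hbe, zero_modByMonic]
      have hρ : (b * e) /ₘ g' ∈ (I ^ (n + 1)).map C := by
        rw [mem_map_C_iff_map_mk_eq_zero, map_divByMonic _ hg', hbe, zero_divByMonic]
      have hdiv := modByMonic_add_div (b * e) g'
      set δ := (b * e) %ₘ g' with hδ_def
      set ρ := (b * e) /ₘ g'
      have hdegδ : δ.degree < g'.degree := degree_modByMonic_lt _ hg'
      have hε : a * e + h' * ρ ∈ (I ^ (n + 1)).map C :=
        add_mem (Ideal.mul_mem_left _ _ he) (Ideal.mul_mem_left _ _ hρ)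
      refine ⟨g' + δ, h' + (a * e + h' * ρ), hg'.add_of_left hdegδ, ?_, ?_, ?_, ?_⟩
      · rw [natDegree_add_eq_left_of_degree_lt hdegδ, hdeg]
      · rw [add_sub_right_comm]
        exact add_mem hgg (hle hδ)
      · rw [add_sub_right_comm]
        exact add_mem hhh (hle hε)
      · have hsplit : p - (g' + δ) * (h' + (a * e + h' * ρ)) =
            -(a * e * (g' - g) + b * e * (h' - h) + δ * (a * e + h' * ρ)) := by
          have : p = e + g' * h' := by rw [he_def]; ring
          rw [this]
          linear_combination (-e) * hab - h' * hdiv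
        have hmul : ∀ x ∈ (I ^ (n + 1)).map (C : A →+* A[X]), ∀ y ∈ I.map (C : A →+* A[X]),
            x * y ∈ (I ^ (n + 1 + 1)).map (C : A →+* A[X]) := fun x hx y hy => by
          rw [pow_succ, Ideal.map_mul]
          exact Ideal.mul_mem_mul hx hy
        rw [hsplit]
        exact neg_mem (add_mem (add_mem (hmul _ (Ideal.mul_mem_left _ _ he) _ hgg)
          (hmul _ (Ideal.mul_mem_left _ _ he) _ hhh)) (hmul _ hδ _ (hle hε)))
  obtain ⟨g', h', hg', hdeg, hgg, hhh, he⟩ := key N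
  refine ⟨g', h', hg', hdeg, hgg, hhh, ?_⟩
  rw [pow_succ, hN, zero_mul, Ideal.zero_eq_bot, Ideal.map_bot, Ideal.mem_bot] at he
  exact sub_eq_zero.mp he

open Polynomial in
/-- A monic polynomial congruent to `X ^ d` modulo nilpotents divides a power of `X`. -/
theorem Polynomial.exists_dvd_X_pow {A : Type*} [CommRing A] {f : A[X]} {d : ℕ}
    (h : ∀ j, IsNilpotent ((f - X ^ d).coeff j)) : ∃ M, f ∣ X ^ M := by
  obtain ⟨M, hM⟩ := Polynomial.isNilpotent_iff.mpr h
  refine ⟨d * M, ?_⟩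
  have := sub_dvd_pow_sub_pow (X ^ d : A[X]) (X ^ d - f) M
  rwa [sub_sub_cancel, ← neg_sub f, neg_pow, hM, mul_zero, sub_zero, ← pow_mul] at this

open Polynomial in
theorem Polynomial.isCoprime_X_of_isUnit_coeff_zero {A : Type*} [CommRing A] {v : A[X]}
    (hv : IsUnit (v.coeff 0)) : IsCoprime v X := by
  obtain ⟨c, hc⟩ := hv.exists_left_inv
  refine ⟨C c, -(C c * v.divX), ?_⟩
  nth_rewrite 1 [← divX_mul_X_add v]
  rw [mul_add, ← C_mul, hc, C_1]
  ring

open Polynomial in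
/-- Uniqueness of Weierstrass preparation. -/
theorem Polynomial.Monic.eq_of_mul_eq_mul {A : Type*} [CommRing A] {f f' v v' : A[X]} {M : ℕ}
    (hf : f.Monic) (hf' : f'.Monic) (hdeg : f.natDegree = f'.natDegree) (hM : f ∣ X ^ M)
    (hv' : IsUnit (v'.coeff 0)) (h : f * v = f' * v') : f = f' := by
  have hco : IsCoprime f v' :=
    ((isCoprime_X_of_isUnit_coeff_zero hv').pow_right.of_isCoprime_of_dvd_right hM).symm
  have hdvd : f ∣ f' := hco.dvd_of_dvd_mul_right (Dvd.intro _ h)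
  exact (eq_of_monic_of_dvd_of_natDegree_le hf hf' hdvd hdeg.ge).symm

open Polynomial in
/-- Let `A` be the universal `K`-algebra carrying polynomials `u i` of degree `< t i`, with nilpotent
coefficients, such that `X ^ N` divides `∏ (X ^ t i * w i + u i)`, where the `w i` are polynomials
over `K` with nonzero constant term and `N = ∑ t i`. Then `A` has dimension `N! / ∏ (t i)!`. -/
theorem finite_and_finrank_mul_prod_factorial.{u} {K A : Type u} [Field K] [CommRing A]
    [Algebra K A] [IsNoetherianRing A] {r N : ℕ} (t : Fin r → ℕ) (hsum : ∑ i, t i = N)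
    (w : Fin r → K[X]) (hw : ∀ i, (w i).coeff 0 ≠ 0) (u : Fin r → A[X])
    (hu : ∀ i, (u i).degree < t i) (hnil : ∀ i j, IsNilpotent ((u i).coeff j))
    (hdvd : X ^ N ∣ ∏ i, (X ^ t i * (w i).map (algebraMap K A) + u i))
    (hex : ∀ {D : Type u} [CommRing D] [Algebra K D] (u' : Fin r → D[X]),
      (∀ i, (u' i).degree < t i) → (∀ i j, IsNilpotent ((u' i).coeff j)) →
      X ^ N ∣ ∏ i, (X ^ t i * (w i).map (algebraMap K D) + u' i) →
      ∃ ψ : A →ₐ[K] D, ∀ i, (u i).map (ψ : A →+* D) = u' i)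
    (hext : ∀ {D : Type u} [CommRing D] [Algebra K D] (ψ₁ ψ₂ : A →ₐ[K] D),
      (∀ i, (u i).map (ψ₁ : A →+* D) = (u i).map (ψ₂ : A →+* D)) → ψ₁ = ψ₂) :
    Module.Finite K A ∧ Module.finrank K A * ∏ i, (t i).factorial = N.factorial := by
  have hA : Nontrivial A := by
    obtain ⟨ψ, -⟩ := hex (D := K) 0 (by simp) (by simp) (by
      simp only [Pi.zero_apply, add_zero, Finset.prod_mul_distrib, Finset.prod_pow_eq_pow_sum, hsum]
      exact dvd_mul_right _ _)
    exact ψ.toRingHom.domain_nontrivial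
  have mem_nil : ∀ {D : Type u} [CommRing D] (q : D[X]),
      q ∈ (nilradical D).map C ↔ ∀ j, IsNilpotent (q.coeff j) := fun q => by
    simp only [Ideal.mem_map_C_iff, mem_nilradical]
  have hwA : ∀ i, IsUnit (((w i).map (algebraMap K A)).coeff 0) := fun i => by
    rw [coeff_map]
    exact (IsUnit.mk0 _ (hw i)).map _
  -- Weierstrass preparation over `A`
  have hfac : ∀ i, ∃ f v : A[X], f.Monic ∧ f.natDegree = t i ∧ IsUnit (v.coeff 0) ∧
      X ^ t i * (w i).map (algebraMap K A) + u i = f * v := by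
    intro i
    obtain ⟨f, v, hf, hdeg, -, hv, h⟩ := exists_monic_factor_of_isNilpotent
      (IsNoetherianRing.isNilpotent_nilradical A) (monic_X_pow (t i))
      (isCoprime_X_of_isUnit_coeff_zero (hwA i)).pow_right.symm
      (p := X ^ t i * (w i).map (algebraMap K A) + u i)
      (by rw [add_sub_cancel_left, mem_nil]; exact hnil i)
    refine ⟨f, v, hf, by rw [hdeg, natDegree_X_pow], ?_, h⟩
    have := (mem_nil _).mp hv 0
    rw [coeff_sub] at this
    simpa using this.isUnit_add_left_of_commute (hwA i) (Commute.all _ _)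
  choose f v hf hfdeg hv hfv using hfac
  have hfprod : ∏ i, f i = X ^ N := by
    rw [Finset.prod_congr rfl fun i _ => hfv i, Finset.prod_mul_distrib] at hdvd
    have hco : IsCoprime (X ^ N) (∏ i, v i) := (isCoprime_X_of_isUnit_coeff_zero (by
      rw [coeff_zero_prod]
      exact IsUnit.prod_univ_iff.mpr hv)).pow_right.symm
    refine (eq_of_monic_of_dvd_of_natDegree_le (monic_X_pow N)
      (monic_prod_of_monic _ _ fun i _ => hf i) (hco.dvd_of_dvd_mul_right hdvd) ?_)
    rw [natDegree_prod_of_monic _ _ fun i _ => hf i, natDegree_X_pow, ← hsum]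
    exact (Finset.sum_congr rfl fun i _ => hfdeg i).le
  obtain ⟨S, _, _, c, ⟨bS⟩, hc, hexS, hextS⟩ := exists_universal_splitting_family r t f hf hfdeg
  obtain ⟨T, _, _, d, ⟨bT⟩, hd, hexT, hextT⟩ :=
    Monic.exists_universal_splitting N (X ^ N : K[X]) (monic_X_pow N) (natDegree_X_pow N)
  have : Nonempty (Fin N.factorial) := ⟨0, N.factorial_pos⟩
  have : Nonempty (Fin (∏ i, (t i).factorial)) :=
    ⟨0, Finset.prod_pos fun i _ => (t i).factorial_pos⟩
  have : Nontrivial T := bT.repr.toEquiv.nontrivial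
  have : Nontrivial S := bS.repr.toEquiv.nontrivial
  let _ : Algebra K S := ((algebraMap A S).comp (algebraMap K A)).toAlgebra
  have : IsScalarTower K A S := IsScalarTower.of_algebraMap_eq' rfl
  let e : (Σ i, Fin (t i)) ≃ Fin N := finSigmaFinEquiv.trans (finCongr hsum)
  -- the map `T → S`
  obtain ⟨ψT, hψT, hψTd⟩ := hexT (algebraMap K S) (fun n => c (e.symm n).1 (e.symm n).2) (by
    rw [e.symm.prod_comp (fun x : (Σ i, Fin (t i)) => X - C (c x.1 x.2)), Fintype.prod_sigma]
    simp only [← hc]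
    rw [← Polynomial.map_prod, hfprod]
    simp)
  have hψTc : ∀ i j, ψT (d (e ⟨i, j⟩)) = c i j := fun i j => by
    rw [hψTd]
    exact congrArg (fun x : (Σ i, Fin (t i)) => c x.1 x.2) (e.symm_apply_apply ⟨i, j⟩)
  -- the map `A → T`
  let F : Fin r → T[X] := fun i => ∏ j, (X - C (d (e ⟨i, j⟩)))
  have hF : ∀ i, (F i).Monic := fun i => monic_prod_X_sub_C _ _
  have hFdeg : ∀ i, (F i).natDegree = t i := fun i => by simp [F]
  have hFprod : ∏ i, F i = X ^ N := by
    rw [Polynomial.map_pow, map_X] at hd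
    rw [hd, ← e.prod_comp, Fintype.prod_sigma]
  have hdnil : ∀ n, IsNilpotent (d n) := fun n => ⟨N, by
    have := congrArg (eval (d n)) hd
    rw [eval_prod, Finset.prod_eq_zero (Finset.mem_univ n) (by simp)] at this
    simpa using this⟩
  have hFnil : ∀ i, (F i).map (Ideal.Quotient.mk (nilradical T)) = X ^ t i := fun i => by
    have : ∀ n, Ideal.Quotient.mk (nilradical T) (d n) = 0 := fun n =>
      Ideal.Quotient.eq_zero_iff_mem.mpr (hdnil n)
    simp [F, Polynomial.map_prod, this]
  let W : Fin r → T[X] := fun i => X ^ t i * (w i).map (algebraMap K T)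
  have hWF : ∀ i, W i + -(W i %ₘ F i) = F i * (W i /ₘ F i) := fun i => by
    rw [← sub_eq_add_neg, sub_eq_iff_eq_add', modByMonic_add_div]
  obtain ⟨ψA, hψA⟩ := hex (fun i => -(W i %ₘ F i))
    (fun i => by
      rw [degree_neg, ← hFdeg i, ← degree_eq_natDegree (hF i).ne_zero]
      exact degree_modByMonic_lt _ (hF i))
    (fun i => by
      rw [← mem_nil, mem_map_C_iff_map_mk_eq_zero, Polynomial.map_neg, map_modByMonic _ (hF i),
        neg_eq_zero, modByMonic_eq_zero_iff_dvd ((hF i).map _), hFnil, Polynomial.map_mul,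
        Polynomial.map_pow, map_X]
      exact dvd_mul_right _ _)
    (by
      rw [Finset.prod_congr rfl fun i _ => hWF i, Finset.prod_mul_distrib, hFprod]
      exact dvd_mul_right _ _)
  have hψAf : ∀ i, (f i).map (ψA : A →+* T) = F i := fun i => by
    obtain ⟨M, hM⟩ := exists_dvd_X_pow (f := F i) (d := t i) (by
      rw [← mem_nil, mem_map_C_iff_map_mk_eq_zero, Polynomial.map_sub, hFnil]
      simp)
    refine ((hF i).eq_of_mul_eq_mul ((hf i).map _) ?_ hM (v := W i /ₘ F i)
      (v' := (v i).map (ψA : A →+* T)) ?_ ?_).symm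
    · rw [(hf i).natDegree_map, hfdeg, hFdeg]
    · rw [coeff_map]
      exact (hv i).map _
    · rw [← hWF, ← hψA, ← Polynomial.map_mul, ← hfv, Polynomial.map_add, Polynomial.map_mul,
        Polynomial.map_map, AlgHom.comp_algebraMap, Polynomial.map_pow, map_X]
  obtain ⟨ψS, hψS, hψSc⟩ := hexS (ψA : A →+* T) (fun i j => d (e ⟨i, j⟩)) hψAf
  have hTS : ψS.comp ψT = RingHom.id T := by
    refine hextT _ _ ?_ fun n => ?_
    · rw [RingHom.comp_assoc, hψT, RingHom.id_comp]
      change (ψS.comp (algebraMap A S)).comp (algebraMap K A) = _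
      rw [hψS, AlgHom.comp_algebraMap]
    · simp [hψTd, hψSc]
  have hFS : ∀ i, (F i).map ψT = (f i).map (algebraMap A S) := fun i => by
    simp [F, Polynomial.map_prod, hψTc, hc]
  let ψT' : T →ₐ[K] S := { ψT with commutes' := DFunLike.congr_fun hψT }
  have hAS : ψT'.comp ψA = IsScalarTower.toAlgHom K A S := by
    refine hext _ _ fun i => ?_
    have h₁ : (u i).map ((ψT'.comp ψA : A →ₐ[K] S) : A →+* S) =
        ((u i).map (ψA : A →+* T)).map ψT := by rw [Polynomial.map_map]; rfl
    have h₂ : (((IsScalarTower.toAlgHom K A S : A →ₐ[K] S)) : A →+* S) = algebraMap A S := rfl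
    rw [h₁, h₂, hψA, Polynomial.map_neg, map_modByMonic _ (hF i), hFS, neg_eq_iff_eq_neg]
    have hW : (W i).map ψT = (X ^ t i * (w i).map (algebraMap K A)).map (algebraMap A S) := by
      simp only [W, Polynomial.map_mul, Polynomial.map_map, hψT, Polynomial.map_pow, map_X]
      rfl
    refine (div_modByMonic_unique ((v i).map (algebraMap A S)) _ ((hf i).map _) ⟨?_, ?_⟩).2
    · rw [hW, ← Polynomial.map_mul, ← hfv, Polynomial.map_add]
      ring
    · rw [degree_neg, degree_eq_natDegree ((hf i).map _).ne_zero, (hf i).natDegree_map, hfdeg]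
      exact degree_map_le.trans_lt (hu i)
  have hST : ψT.comp ψS = RingHom.id S := by
    refine hextS _ _ ?_ fun i j => ?_
    · rw [RingHom.comp_assoc, hψS]
      exact congrArg (fun ψ : A →ₐ[K] S => (ψ : A →+* S)) hAS
    · simp [hψTc, hψSc]
  let E : T ≃ₗ[K] S := LinearEquiv.ofBijective ψT'.toLinearMap
    (Function.bijective_iff_has_inverse.mpr
      ⟨ψS, DFunLike.congr_fun hTS, DFunLike.congr_fun hST⟩)
  have : Module.Finite K T := Module.Finite.of_basis bT
  have : Module.Finite K S := Module.Finite.equiv E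
  have : Module.Free A S := Module.Free.of_basis bS
  refine ⟨Module.Finite.of_injective (IsScalarTower.toAlgHom K A S).toLinearMap
    (FaithfulSMul.algebraMap_injective A S), ?_⟩
  have h := Module.finrank_mul_finrank K A S
  rwa [Module.finrank_eq_card_basis bS, ← E.finrank_eq, Module.finrank_eq_card_basis bT,
    Fintype.card_fin, Fintype.card_fin] at h

section CoordinateSubspace

variable {k σ : Type*} [Field k] (low : σ → Prop)

theorem MvPolynomial.sub_rename_killCompl_mem (f : MvPolynomial σ k) :
    f - rename Subtype.val (killCompl (Subtype.val_injective (p := fun s => ¬ low s)) f) ∈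
      Ideal.span (X '' {s | low s} : Set (MvPolynomial σ k)) := by
  induction f using MvPolynomial.induction_on with
  | C a => simp
  | add p q hp hq =>
    rw [map_add, map_add, add_sub_add_comm]
    exact add_mem hp hq
  | mul_X p s hp =>
    by_cases hs : low s
    · have : killCompl (Subtype.val_injective (p := fun s => ¬ low s)) (X s : MvPolynomial σ k) = 0 := by
        simp [killCompl, hs]
      rw [map_mul, this, mul_zero, map_zero, sub_zero]
      exact Ideal.mul_mem_left _ _ (Ideal.subset_span ⟨s, hs, rfl⟩)
    · have : killCompl (Subtype.val_injective (p := fun s => ¬ low s)) (X s : MvPolynomial σ k) =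
          X ⟨s, hs⟩ := by
        rw [← killCompl_rename_app (Subtype.val_injective (p := fun s => ¬ low s)) (X ⟨s, hs⟩),
          rename_X]
      rw [map_mul, this, map_mul, rename_X, ← sub_mul]
      exact Ideal.mul_mem_right _ _ hp

theorem MvPolynomial.mem_span_X_iff_killCompl_eq_zero (f : MvPolynomial σ k) :
    f ∈ Ideal.span (X '' {s | low s} : Set (MvPolynomial σ k)) ↔
      killCompl (Subtype.val_injective (p := fun s => ¬ low s)) f = 0 := by
  refine ⟨fun hf => ?_, fun hf => ?_⟩
  · suffices h : Ideal.span (X '' {s | low s} : Set (MvPolynomial σ k)) ≤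
        RingHom.ker (killCompl (Subtype.val_injective (p := fun s => ¬ low s))) from h hf
    rw [Ideal.span_le]
    rintro _ ⟨s, hs, rfl⟩
    have hs' : low s := hs
    simp [killCompl, hs']
  · simpa [hf] using sub_rename_killCompl_mem low f

/-- The local ring of affine space at the generic point of a coordinate subspace has a coefficient
field, the function field of the subspace. -/
theorem MvPolynomial.exists_coefficientField (K : Type*) [Field K]
    [Algebra (MvPolynomial {s // ¬ low s} k) K] [IsFractionRing (MvPolynomial {s // ¬ low s} k) K]
    (P : Ideal (MvPolynomial σ k)) [P.IsPrime]
    (hP : P = Ideal.span (X '' {s | low s})) :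
    ∃ κ : K →+* Localization.AtPrime P,
      (∀ g : MvPolynomial {s // ¬ low s} k, κ (algebraMap _ _ g) =
        algebraMap (MvPolynomial σ k) _ (rename Subtype.val g)) ∧
      ∀ a, ∃ c, a - κ c ∈ IsLocalRing.maximalIdeal (Localization.AtPrime P) := by
  let ρ : MvPolynomial σ k →ₐ[k] MvPolynomial {s // ¬ low s} k :=
    killCompl (Subtype.val_injective (p := fun s => ¬ low s))
  have hρ : ∀ f, f ∈ P ↔ ρ f = 0 := fun f => by
    rw [hP]
    exact mem_span_X_iff_killCompl_eq_zero low f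
  let g : MvPolynomial {s // ¬ low s} k →+* Localization.AtPrime P :=
    (algebraMap (MvPolynomial σ k) (Localization.AtPrime P)).comp
      (rename Subtype.val : MvPolynomial {s // ¬ low s} k →ₐ[k] MvPolynomial σ k).toRingHom
  have hg : ∀ x : nonZeroDivisors (MvPolynomial {s // ¬ low s} k), IsUnit (g x) := fun x => by
    refine IsLocalization.map_units _ (⟨rename Subtype.val x.1, fun h => ?_⟩ : P.primeCompl)
    have h' := (hρ _).mp h
    simp only [ρ, killCompl_rename_app] at h'
    exact nonZeroDivisors.ne_zero x.2 h'
  refine ⟨IsLocalization.lift hg, fun f => IsLocalization.lift_eq hg f, fun a => ?_⟩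
  set κ := IsLocalization.lift (S := K) hg
  have hκ : ∀ f, algebraMap _ (Localization.AtPrime P) f -
      κ (algebraMap (MvPolynomial {s // ¬ low s} k) _ (ρ f)) ∈
      IsLocalRing.maximalIdeal (Localization.AtPrime P) := fun f => by
    have h₁ : κ (algebraMap (MvPolynomial {s // ¬ low s} k) _ (ρ f)) = g (ρ f) :=
      IsLocalization.lift_eq hg _
    rw [h₁, ← Localization.AtPrime.map_eq_maximalIdeal]
    change algebraMap _ _ f - algebraMap _ _ (rename Subtype.val (ρ f)) ∈ _
    rw [← map_sub]
    refine Ideal.mem_map_of_mem _ ?_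
    rw [hP]
    exact sub_rename_killCompl_mem low f
  obtain ⟨x, s, rfl⟩ := IsLocalization.exists_mk'_eq P.primeCompl a
  have hs : algebraMap (MvPolynomial {s // ¬ low s} k) K (ρ s) ≠ 0 := by
    rw [Ne, FaithfulSMul.algebraMap_eq_zero_iff]
    exact fun h => s.2 ((hρ _).mpr h)
  refine ⟨algebraMap (MvPolynomial {s // ¬ low s} k) _ (ρ x) / algebraMap _ _ (ρ s), ?_⟩
  refine ((IsLocalRing.maximalIdeal _).unit_mul_mem_iff_mem
    (IsLocalization.map_units (Localization.AtPrime P) s)).mp ?_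
  set c := algebraMap (MvPolynomial {s // ¬ low s} k) K (ρ x) /
    algebraMap (MvPolynomial {s // ¬ low s} k) _ (ρ s) with hc
  have hmul : κ (algebraMap (MvPolynomial {s // ¬ low s} k) _ (ρ s)) * κ c =
      κ (algebraMap (MvPolynomial {s // ¬ low s} k) _ (ρ x)) := by
    rw [← map_mul, hc, mul_div_cancel₀ _ hs]
  rw [mul_sub, IsLocalization.mk'_spec']
  have := sub_mem (hκ x) (Ideal.mul_mem_right (κ c) _ (hκ s))
  rw [sub_mul, hmul] at this
  convert this using 1
  ring

/-- Ring homomorphisms out of the local ring at the generic point of a coordinate subspace. -/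
theorem MvPolynomial.exists_localization_lift {K : Type*} [Field K]
    [Algebra (MvPolynomial {s // ¬ low s} k) K] [IsFractionRing (MvPolynomial {s // ¬ low s} k) K]
    (P : Ideal (MvPolynomial σ k)) [P.IsPrime]
    (hP : P = Ideal.span (X '' {s | low s}))
    {κ : K →+* Localization.AtPrime P}
    (hκ : ∀ g : MvPolynomial {s // ¬ low s} k, κ (algebraMap _ _ g) =
      algebraMap (MvPolynomial σ k) _ (rename Subtype.val g))
    {D : Type*} [CommRing D] (α : K →+* D) (y : σ → D)
    (hlow : ∀ s, low s → IsNilpotent (y s))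
    (hhigh : ∀ s (hs : ¬ low s), y s =
      α (algebraMap (MvPolynomial {s // ¬ low s} k) _ (X ⟨s, hs⟩))) :
    ∃ ψ : Localization.AtPrime P →+* D, ψ.comp κ = α ∧
      ∀ s, ψ (algebraMap (MvPolynomial σ k) _ (X s)) = y s := by
  let φ : MvPolynomial σ k →+* D :=
    eval₂Hom ((α.comp (algebraMap (MvPolynomial {s // ¬ low s} k) _)).comp C) y
  have hφX : ∀ s, φ (X s) = y s := fun s => by simp [φ]
  have hφ : φ.comp (rename Subtype.val : MvPolynomial {s // ¬ low s} k →ₐ[k] _).toRingHom =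
      α.comp (algebraMap (MvPolynomial {s // ¬ low s} k) _) := by
    ext s
    · simp [φ]
    · simp [φ, hhigh _ s.2]
  have hφP : ∀ f ∈ P, IsNilpotent (φ f) := fun f hf => by
    suffices h : P ≤ (nilradical D).comap φ from h hf
    rw [hP, Ideal.span_le]
    rintro _ ⟨s, hs, rfl⟩
    change φ (X s) ∈ nilradical D
    rw [hφX]
    exact hlow s hs
  have hunit : ∀ f : P.primeCompl, IsUnit (φ f) := fun f => by
    have hmem := sub_rename_killCompl_mem low f.1
    rw [← hP] at hmem
    have h := hφP _ hmem
    set g := killCompl (Subtype.val_injective (p := fun s => ¬ low s)) f.1 with hg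
    have hg0 : g ≠ 0 := fun h0 => f.2 (by
      have := (mem_span_X_iff_killCompl_eq_zero low f.1).mpr h0
      rwa [← hP] at this)
    have hu : IsUnit (φ (rename Subtype.val g)) := by
      have h₁ : φ (rename Subtype.val g) = α (algebraMap (MvPolynomial {s // ¬ low s} k) _ g) :=
        DFunLike.congr_fun hφ g
      rw [h₁]
      refine (IsUnit.mk0 _ ?_).map α
      rwa [Ne, FaithfulSMul.algebraMap_eq_zero_iff]
    have := h.isUnit_add_left_of_commute hu (Commute.all _ _)
    rwa [← map_add, add_sub_cancel] at this
  refine ⟨IsLocalization.lift hunit, ?_, fun s => by rw [IsLocalization.lift_eq, hφX]⟩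
  refine IsLocalization.ringHom_ext (nonZeroDivisors (MvPolynomial {s // ¬ low s} k)) ?_
  rw [← hφ]
  exact RingHom.ext fun g => by simp [hκ, IsLocalization.lift_eq]

theorem MvPolynomial.localization_ringHom_ext {K : Type*} [Field K]
    [Algebra (MvPolynomial {s // ¬ low s} k) K] [IsFractionRing (MvPolynomial {s // ¬ low s} k) K]
    (P : Ideal (MvPolynomial σ k)) [P.IsPrime]
    {κ : K →+* Localization.AtPrime P}
    (hκ : ∀ g : MvPolynomial {s // ¬ low s} k, κ (algebraMap _ _ g) =
      algebraMap (MvPolynomial σ k) _ (rename Subtype.val g))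
    {D : Type*} [CommRing D] {ψ₁ ψ₂ : Localization.AtPrime P →+* D}
    (h : ψ₁.comp κ = ψ₂.comp κ)
    (hlow : ∀ s, low s → ψ₁ (algebraMap (MvPolynomial σ k) _ (X s)) =
      ψ₂ (algebraMap (MvPolynomial σ k) _ (X s))) : ψ₁ = ψ₂ := by
  refine IsLocalization.ringHom_ext P.primeCompl (MvPolynomial.ringHom_ext (fun a => ?_) fun s => ?_)
  · simpa [hκ] using DFunLike.congr_fun h (algebraMap (MvPolynomial {s // ¬ low s} k) _ (C a))
  · by_cases hs : low s
    · exact hlow s hs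
    · simpa [hκ] using DFunLike.congr_fun h (algebraMap (MvPolynomial {s // ¬ low s} k) _ (X ⟨s, hs⟩))

end CoordinateSubspace

/-- The length of a finite-dimensional local algebra with trivial residue field extension is its
dimension. -/
theorem IsLocalRing.length_eq_finrank_of_residue {K A : Type*} [Field K] [CommRing A]
    [IsLocalRing A] [Algebra K A] [Module.Finite K A]
    (h : ∀ a : A, ∃ c : K, a - algebraMap K A c ∈ IsLocalRing.maximalIdeal A) :
    Module.length A A = Module.finrank K A := by
  have : IsLocalHom (algebraMap K A) := ⟨fun c hc => by
    refine IsUnit.mk0 c fun h0 => ?_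
    rw [h0, map_zero] at hc
    exact not_isUnit_zero hc⟩
  have hs : Function.Surjective
      (algebraMap (IsLocalRing.ResidueField K) (IsLocalRing.ResidueField A)) := fun x => by
    obtain ⟨a, rfl⟩ := IsLocalRing.residue_surjective x
    obtain ⟨c, hc⟩ := h a
    refine ⟨IsLocalRing.residue K c, ?_⟩
    rw [IsLocalRing.ResidueField.algebraMap_residue, eq_comm, ← sub_eq_zero, ← map_sub]
    exact (IsLocalRing.residue_eq_zero_iff _).mpr hc
  have := IsLocalRing.length_restrictScalars K A A
  rwa [Module.length_eq_of_surjective hs, Module.length_eq_one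
    (IsLocalRing.ResidueField A) (IsLocalRing.ResidueField A), mul_one,
    Module.length_eq_finrank, eq_comm] at this

/-- The localization of `R ⧸ J` at `P` has the length of a quotient of the local ring at `P`. -/
theorem exists_moduleLength_localizedModule_quotient.{u} {R : Type u} [CommRing R] (J P : Ideal R)
    [P.IsPrime] :
    ∃ (A : Type u) (_ : CommRing A) (π : Localization.AtPrime P →+* A),
      Function.Surjective π ∧
      RingHom.ker π = J.map (algebraMap R (Localization.AtPrime P)) ∧
      moduleLength (Localization P.primeCompl) (LocalizedModule P.primeCompl (R ⧸ J)) =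
        Module.length A A := by
  refine ⟨Localization.AtPrime P ⧸ J.map (algebraMap R (Localization.AtPrime P)), _,
    Ideal.Quotient.mk _, Ideal.Quotient.mk_surjective, Ideal.mk_ker, ?_⟩
  rw [← Module.length_eq_of_surjective (S := Localization.AtPrime P) Ideal.Quotient.mk_surjective,
    ← Ideal.localized'_eq_map (Localization.AtPrime P) P.primeCompl J, moduleLength,
    ← Module.length_eq_height]
  exact (IsLocalizedModule.linearEquiv P.primeCompl
    (LocalizedModule.mkLinearMap P.primeCompl (R ⧸ J))
    (J.toLocalizedQuotient' (Localization.AtPrime P) P.primeCompl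
      (Algebra.linearMap R (Localization.AtPrime P)))).extendScalarsOfIsLocalization
      P.primeCompl (Localization.AtPrime P) |>.length_eq

open Polynomial in
theorem Polynomial.natTrailingDegree_prod {ι R : Type*} [CommRing R] [IsDomain R]
    (s : Finset ι) (p : ι → R[X]) (hp : ∀ i ∈ s, p i ≠ 0) :
    (∏ i ∈ s, p i).natTrailingDegree = ∑ i ∈ s, (p i).natTrailingDegree := by
  classical
  induction s using Finset.induction_on with
  | empty => simp
  | insert a s ha ih =>
    rw [Finset.prod_insert ha, Finset.sum_insert ha, natTrailingDegree_mul
      (hp a (Finset.mem_insert_self a s)) (Finset.prod_ne_zero_iff.mpr fun i hi =>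
        hp i (Finset.mem_insert_of_mem hi)), ih fun i hi => hp i (Finset.mem_insert_of_mem hi)]

open Polynomial in
/-- If the coefficients of degree `t i` are units and the product vanishes to order `∑ t i`, then
the coefficients of lower degree are nilpotent. -/
theorem Polynomial.isNilpotent_coeff_of_X_pow_dvd_prod {ι D : Type*} [Fintype ι] [CommRing D]
    (p : ι → D[X]) (t : ι → ℕ) (hunit : ∀ i, IsUnit ((p i).coeff (t i)))
    (hdvd : X ^ (∑ i, t i) ∣ ∏ i, p i) (i : ι) {j : ℕ} (hj : j < t i) :
    IsNilpotent ((p i).coeff j) := by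
  rw [← mem_nilradical, nilradical_eq_sInf, Ideal.mem_sInf]
  intro q hq
  have : q.IsPrime := hq
  have hc : ∀ i, ((p i).map (Ideal.Quotient.mk q)).coeff (t i) ≠ 0 := fun i => by
    rw [coeff_map]
    exact ((hunit i).map (Ideal.Quotient.mk q)).ne_zero
  have h0 : ∀ i, (p i).map (Ideal.Quotient.mk q) ≠ 0 := fun i h => hc i (by simp [h])
  have hle : ∀ i, ((p i).map (Ideal.Quotient.mk q)).natTrailingDegree ≤ t i :=
    fun i => natTrailingDegree_le_of_ne_zero (hc i)
  have hsum : ∑ i, t i ≤ ∑ i, ((p i).map (Ideal.Quotient.mk q)).natTrailingDegree := by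
    rw [← natTrailingDegree_prod _ _ fun i _ => h0 i]
    refine le_natTrailingDegree (Finset.prod_ne_zero_iff.mpr fun i _ => h0 i) fun d hd => ?_
    have h := Polynomial.map_dvd (Ideal.Quotient.mk q) hdvd
    rw [Polynomial.map_pow, map_X, Polynomial.map_prod] at h
    exact X_pow_dvd_iff.mp h d hd
  have heq := (Finset.sum_eq_sum_iff_of_le fun i _ => hle i).mp
    (le_antisymm (Finset.sum_le_sum fun i _ => hle i) hsum) i (Finset.mem_univ i)
  rw [← Ideal.Quotient.eq_zero_iff_mem, ← coeff_map]
  exact coeff_eq_zero_of_lt_natTrailingDegree (by omega)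

section JetIdeal

open Polynomial

variable {k : Type*} [Field k] {m n r : ℕ} {hrn : r ≤ n}

/-- A point lies on the jet scheme iff the product of its first `r` arcs vanishes to order
`m + 1`. -/
theorem jetIdeal_le_ker_iff {D : Type*} [CommRing D] (φ : JetRing k m n →+* D) :
    jetIdeal k m n r hrn ≤ RingHom.ker φ ↔
      (X : D[X]) ^ (m + 1) ∣ ∏ i : Fin r, ∑ l : Fin (m + 1),
        C (φ (MvPolynomial.X (Fin.castLE hrn i, l))) * X ^ (l : ℕ) := by
  have h : ∏ i : Fin r, ∑ l : Fin (m + 1),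
      C (φ (MvPolynomial.X (Fin.castLE hrn i, l))) * X ^ (l : ℕ) =
      (∏ i : Fin r, ∑ l : Fin (m + 1),
        C (MvPolynomial.X (Fin.castLE hrn i, l) : JetRing k m n) * X ^ (l : ℕ)).map φ := by
    simp [Polynomial.map_prod, Polynomial.map_sum]
  rw [h, X_pow_dvd_iff, jetIdeal, Ideal.span_le]
  simp only [coeff_map, Set.image_subset_iff, Nat.lt_succ_iff]
  exact Iff.rfl

end JetIdeal

open Polynomial in
theorem Polynomial.dvd_prod_add_iff {ι D : Type*} [Fintype ι] [CommRing D] (q : D[X])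
    (p : ι → D[X]) : q ∣ ∏ i, (p i + q) ↔ q ∣ ∏ i, p i := by
  rw [← Ideal.mem_span_singleton, ← Ideal.mem_span_singleton, ← Ideal.Quotient.eq_zero_iff_mem,
    ← Ideal.Quotient.eq_zero_iff_mem, map_prod, map_prod]
  simp [Ideal.Quotient.eq_zero_iff_mem.mpr (Ideal.mem_span_singleton_self q)]

section Truncation

open Polynomial

variable {D : Type*} [CommRing D] {N : ℕ}

theorem Polynomial.coeff_sum_fin_C_mul_X_pow (a : Fin N → D) (j : ℕ) :
    (∑ l : Fin N, C (a l) * X ^ (l : ℕ)).coeff j = if h : j < N then a ⟨j, h⟩ else 0 := by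
  rw [finsetSum_coeff]
  simp only [coeff_C_mul_X_pow]
  split_ifs with h
  · rw [Finset.sum_eq_single ⟨j, h⟩] <;> grind
  · exact Finset.sum_eq_zero fun l _ => if_neg (by omega)

/-- The part of degree less than `t` of the polynomial with coefficients `a`. -/
noncomputable def lowerPart (t : ℕ) (a : Fin N → D) : D[X] :=
  ∑ l : Fin N, C (if (l : ℕ) < t then a l else 0) * X ^ (l : ℕ)

/-- The part of degree at least `t` of the monic polynomial of degree `N` with lower coefficients
`a`, divided by `X ^ t`. -/
noncomputable def upperPart (t : ℕ) (a : Fin N → D) : D[X] :=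
  ∑ l : Fin N, C (if (l : ℕ) < t then 0 else a l) * X ^ (l - t : ℕ) + X ^ (N - t)

theorem coeff_lowerPart {t : ℕ} (ht : t ≤ N) (a : Fin N → D) (j : ℕ) :
    (lowerPart t a).coeff j = if h : j < t then a ⟨j, h.trans_le ht⟩ else 0 := by
  rw [lowerPart, coeff_sum_fin_C_mul_X_pow]
  grind

theorem degree_lowerPart_lt {t : ℕ} (ht : t ≤ N) (a : Fin N → D) :
    (lowerPart t a).degree < t := by
  rw [degree_lt_iff_coeff_zero]
  intro j hj
  rw [coeff_lowerPart ht, dif_neg (by omega)]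

theorem lowerPart_coeff {t : ℕ} (ht : t ≤ N) {u : D[X]} (hu : u.degree < t) :
    lowerPart t (fun l : Fin N => u.coeff l) = u := by
  ext j
  rw [coeff_lowerPart ht]
  split_ifs with h
  · rfl
  · exact ((degree_lt_iff_coeff_zero _ _).mp hu j (by omega)).symm

theorem map_lowerPart {E : Type*} [CommRing E] (ψ : D →+* E) (t : ℕ) (a : Fin N → D) :
    (lowerPart t a).map ψ = lowerPart t fun l => ψ (a l) := by
  simp [lowerPart, Polynomial.map_sum, apply_ite ψ]

theorem coeff_zero_upperPart {t : ℕ} (ht : t ≤ N) (a : Fin N → D) :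
    (upperPart t a).coeff 0 = if h : t < N then a ⟨t, h⟩ else 1 := by
  rw [upperPart, coeff_add, finsetSum_coeff]
  simp only [coeff_C_mul_X_pow, coeff_X_pow]
  by_cases h : t < N
  · rw [Finset.sum_eq_single ⟨t, h⟩]
    · simp [h, show 0 ≠ N - t by omega]
    · intro l _ hl
      have : (l : ℕ) ≠ t := fun h => hl (Fin.ext h)
      grind
    · simp
  · rw [Finset.sum_eq_zero (by grind), zero_add, dif_neg h, if_pos (by omega)]

theorem X_pow_mul_upperPart_add_lowerPart {K : Type*} [CommRing K] (α : K →+* D) {t : ℕ}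
    (ht : t ≤ N) (b : Fin N → K) (a : Fin N → D) (h : ∀ l : Fin N, t ≤ l → a l = α (b l)) :
    X ^ t * (upperPart t b).map α + lowerPart t a =
      ∑ l : Fin N, C (a l) * X ^ (l : ℕ) + X ^ N := by
  rw [upperPart, lowerPart, Polynomial.map_add, mul_add, add_right_comm, Polynomial.map_pow, map_X,
    ← pow_add, Nat.add_sub_cancel' ht, Polynomial.map_sum, Finset.mul_sum,
    ← Finset.sum_add_distrib]
  congr 1
  refine Finset.sum_congr rfl fun l _ => ?_
  split_ifs with hl
  · simp
  · rw [h l (by omega), Polynomial.map_mul, map_C, Polynomial.map_pow, map_X, mul_left_comm,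
      ← pow_add, Nat.add_sub_cancel' (by omega)]
    simp

end Truncation

section LocalMultiplicity

open Polynomial

universe u

variable {k : Type u} [Field k] {m n r : ℕ} {hrn : r ≤ n}

/-- The jet variables that vanish at the generic point of the component. -/
def IsLow {m n r : ℕ} (t : Fin r → ℕ) (s : Fin n × Fin (m + 1)) : Prop :=
  ∃ h : s.1.val < r, s.2.val < t ⟨s.1, h⟩

theorem isLow_castLE {t : Fin r → ℕ} {i : Fin r} {l : Fin (m + 1)} :
    IsLow t (Fin.castLE hrn i, l) ↔ (l : ℕ) < t i := by
  simp [IsLow]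

theorem compPrime_eq_span_image (t : Fin r → ℕ) :
    compPrime k m n r hrn t = Ideal.span (MvPolynomial.X '' {s | IsLow t s}) := by
  rw [compPrime]
  congr 1
  ext p
  constructor
  · rintro ⟨i, j, hij, rfl⟩
    exact ⟨_, isLow_castLE.mpr hij, rfl⟩
  · rintro ⟨⟨i, j⟩, ⟨hi, hij⟩, rfl⟩
    exact ⟨⟨i, hi⟩, j, hij, rfl⟩

/-- The local ring of the jet scheme at the generic point of the component, presented as a quotient
of the local ring at `P` of the affine space. -/
theorem exists_length_eq_and_mul_prod_factorial (t : Fin r → ℕ) (ht : ∀ i, t i ≤ m + 1)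
    (hsum : ∑ i, t i = m + 1) (P : Ideal (JetRing k m n)) [P.IsPrime]
    (hP : P = Ideal.span (MvPolynomial.X '' {s | IsLow t s}))
    (K : Type u) [Field K]
    [Algebra (MvPolynomial {s : Fin n × Fin (m + 1) // ¬ IsLow t s} k) K]
    [IsFractionRing (MvPolynomial {s : Fin n × Fin (m + 1) // ¬ IsLow t s} k) K]
    {A : Type u} [CommRing A] (π : Localization.AtPrime P →+* A) (hπ : Function.Surjective π)
    (hker : RingHom.ker π =
      (jetIdeal k m n r hrn).map (algebraMap (JetRing k m n) (Localization.AtPrime P))) :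
    ∃ d : ℕ, Module.length A A = d ∧ d * ∏ i, (t i).factorial = (m + 1).factorial := by
  classical
  obtain ⟨κ, hκ, hres⟩ := MvPolynomial.exists_coefficientField (IsLow t) K P hP
  let _ : Algebra K A := (π.comp κ).toAlgebra
  have : IsNoetherianRing (Localization.AtPrime P) :=
    IsLocalization.isNoetherianRing P.primeCompl _ inferInstance
  have : IsNoetherianRing A := isNoetherianRing_of_surjective _ _ π hπ
  let x : Fin n × Fin (m + 1) → Localization.AtPrime P := fun s =>
    algebraMap (JetRing k m n) (Localization.AtPrime P) (MvPolynomial.X s)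
  let y : Fin n × Fin (m + 1) → K := fun s => if h : IsLow t s then 0 else
    algebraMap (MvPolynomial {s : Fin n × Fin (m + 1) // ¬ IsLow t s} k) K (MvPolynomial.X ⟨s, h⟩)
  have hy : ∀ s (h : ¬ IsLow t s), y s =
      algebraMap (MvPolynomial {s : Fin n × Fin (m + 1) // ¬ IsLow t s} k) K
        (MvPolynomial.X ⟨s, h⟩) := fun s h => dif_neg h
  have hxy : ∀ s, ¬ IsLow t s → x s = κ (y s) := fun s hs => by
    rw [hy s hs, hκ, MvPolynomial.rename_X]
  let w : Fin r → K[X] := fun i => upperPart (t i) fun l => y (Fin.castLE hrn i, l)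
  let u : Fin r → A[X] := fun i => lowerPart (t i) fun l : Fin (m + 1) =>
    π (x (Fin.castLE hrn i, l))
  have hw : ∀ i, (w i).coeff 0 ≠ 0 := fun i => by
    rw [coeff_zero_upperPart (ht i)]
    split_ifs with h
    · rw [hy _ (by simp [isLow_castLE]), Ne, FaithfulSMul.algebraMap_eq_zero_iff]
      exact MvPolynomial.X_ne_zero _
    · exact one_ne_zero
  have hu : ∀ i, (u i).degree < t i := fun i => degree_lowerPart_lt (ht i) _
  -- the defining condition of `A`, for an arbitrary assignment of the variables
  have hcrit : ∀ {D : Type u} [CommRing D] (ψ : Localization.AtPrime P →+* D) (α : K →+* D),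
      ψ.comp κ = α →
      (RingHom.ker π ≤ RingHom.ker ψ ↔ X ^ (m + 1) ∣ ∏ i, (X ^ t i * (w i).map α +
        lowerPart (t i) fun l : Fin (m + 1) => ψ (x (Fin.castLE hrn i, l)))) := by
    intro D _ ψ α hα
    have hprod : ∀ i, X ^ t i * (w i).map α +
        (lowerPart (t i) fun l : Fin (m + 1) => ψ (x (Fin.castLE hrn i, l))) =
        ∑ l : Fin (m + 1), C (ψ (x (Fin.castLE hrn i, l))) * X ^ (l : ℕ) + X ^ (m + 1) :=
      fun i => X_pow_mul_upperPart_add_lowerPart α (ht i) _ _ fun l hl => by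
        rw [hxy _ (by rw [isLow_castLE]; omega), ← hα]
        rfl
    simp only [hprod]
    rw [dvd_prod_add_iff, hker, Ideal.map_le_iff_le_comap, RingHom.comap_ker]
    exact jetIdeal_le_ker_iff (ψ.comp (algebraMap (JetRing k m n) (Localization.AtPrime P)))
  have hdvd : X ^ (m + 1) ∣ ∏ i, (X ^ t i * (w i).map (algebraMap K A) + u i) :=
    (hcrit (π) _ rfl).mp le_rfl
  have hnil : ∀ i j, IsNilpotent ((u i).coeff j) := fun i j => by
    by_cases hj : j < t i
    · have h := isNilpotent_coeff_of_X_pow_dvd_prod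
        (fun i => X ^ t i * (w i).map (algebraMap K A) + u i) t (fun i => ?_)
        (by rwa [hsum]) i hj
      · rw [coeff_add, coeff_X_pow_mul', if_neg (by omega), zero_add] at h
        exact h
      · have hi := (degree_lt_iff_coeff_zero _ _).mp (hu i) (t i) le_rfl
        simp only [coeff_add, hi, add_zero, coeff_X_pow_mul', le_refl, if_true, Nat.sub_self,
          coeff_map]
        exact (IsUnit.mk0 _ (hw i)).map _
    · rw [(degree_lt_iff_coeff_zero _ _).mp (hu i) j (by omega)]
      exact IsNilpotent.zero
  have hmain := finite_and_finrank_mul_prod_factorial t hsum w hw u hu hnil hdvd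
    (by
      intro D _ _ u' hu' hnil' hdvd'
      let z : Fin n × Fin (m + 1) → D := fun s =>
        if h : IsLow t s then (u' ⟨s.1, h.1⟩).coeff s.2 else algebraMap K D (y s)
      have hz : ∀ i (l : Fin (m + 1)), (l : ℕ) < t i →
          z (Fin.castLE hrn i, l) = (u' i).coeff l :=
        fun i l hl => dif_pos (isLow_castLE.mpr hl)
      obtain ⟨ψ, hψκ, hψ⟩ := MvPolynomial.exists_localization_lift (IsLow t) P hP hκ
        (algebraMap K D) z (fun s hs => by simpa [z, hs] using hnil' _ _)
        (fun s hs => by rw [← hy s hs]; exact dif_neg hs)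
      have hlow : ∀ i, (lowerPart (t i) fun l : Fin (m + 1) =>
          ψ (x (Fin.castLE hrn i, l))) = u' i := fun i => by
        conv_rhs => rw [← lowerPart_coeff (ht i) (hu' i)]
        simp only [lowerPart]
        refine Finset.sum_congr rfl fun l _ => ?_
        split_ifs with hl
        · rw [hψ, hz i l hl]
        · rfl
      have hker' : RingHom.ker π ≤ RingHom.ker ψ :=
        (hcrit ψ _ hψκ).mpr (by simpa only [hlow] using hdvd')
      have hlift := π.liftOfSurjective_comp_apply hπ ⟨ψ, hker'⟩
      refine ⟨⟨π.liftOfSurjective hπ ⟨ψ, hker'⟩, fun c => ?_⟩, fun i => ?_⟩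
      · exact (hlift _).trans (DFunLike.congr_fun hψκ c)
      · refine (map_lowerPart _ _ _).trans ?_
        rw [← hlow i]
        simp only [← hlift]
        rfl)
    (by
      intro D _ _ ψ₁ ψ₂ h
      refine AlgHom.coe_ringHom_injective ((RingHom.cancel_right hπ).mp ?_)
      refine MvPolynomial.localization_ringHom_ext (IsLow t) P hκ ?_ ?_
      · ext c
        exact (ψ₁.commutes c).trans (ψ₂.commutes c).symm
      · rintro ⟨i, l⟩ ⟨hi, hl⟩
        have := congrArg (fun p => p.coeff (l : ℕ)) (h ⟨i, hi⟩)
        simpa [coeff_map, u, coeff_lowerPart (ht _), hl, x] using this)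
  obtain ⟨hfin, hrank⟩ := hmain
  have : Nontrivial A := by
    refine Module.nontrivial_of_finrank_pos (R := K) (Nat.pos_of_ne_zero fun h0 => ?_)
    rw [h0, zero_mul] at hrank
    exact (Nat.factorial_ne_zero _) hrank.symm
  have : IsLocalRing A := .of_surjective' _ hπ
  refine ⟨_, IsLocalRing.length_eq_finrank_of_residue (K := K) fun a => ?_, hrank⟩
  obtain ⟨b, rfl⟩ := hπ a
  obtain ⟨c, hc⟩ := hres b
  refine ⟨c, ?_⟩
  change π b - π (κ c) ∈ _
  rw [← map_sub]
  have := IsLocalHom.of_surjective _ hπ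
  exact fun h => hc ((isUnit_map_iff π _).mp h)

end LocalMultiplicity

/-- **Main Theorem** (multiplicity of jet schemes of a simple normal crossing divisor).
Let `k` be an algebraically closed field of characteristic zero, and `t_1, …, t_r`
nonnegative integers with each `t_i ≤ m + 1` and `t_1 + ⋯ + t_r = m + 1`.  Then the
multiplicity of the `m`-th jet scheme of `X = Spec k[x_1,…,x_n]/(x_1⋯x_r)` along the
component defined by `P = P(m; t_1, …, t_r)`, i.e. the length of the `R_P`-module
`(R/J_m)_P`, equals `(m+1)!/(t_1! ⋯ t_r!)`. -/
theorem multiplicity_of_jet_scheme_along_component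
    (k : Type*) [Field k] [IsAlgClosed k] [CharZero k]
    (m n r : ℕ) (hr : 1 ≤ r) (hrn : r ≤ n)
    (t : Fin r → ℕ) (ht : ∀ i, t i ≤ m + 1) (hsum : ∑ i, t i = m + 1)
    [hP : (compPrime k m n r hrn t).IsPrime] :
    moduleLength (Localization (compPrime k m n r hrn t).primeCompl)
      (LocalizedModule (compPrime k m n r hrn t).primeCompl
        (JetRing k m n ⧸ jetIdeal k m n r hrn)) =
      ((Nat.factorial (m + 1) / ∏ i, Nat.factorial (t i) : ℕ) : ℕ∞) := by
  obtain ⟨A, _, π, hπ, hker, hlength⟩ := exists_moduleLength_localizedModule_quotient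
    (jetIdeal k m n r hrn) (compPrime k m n r hrn t)
  obtain ⟨d, hd, hmul⟩ := exists_length_eq_and_mul_prod_factorial t ht hsum
    (compPrime k m n r hrn t) (compPrime_eq_span_image t)
    (FractionRing (MvPolynomial {s : Fin n × Fin (m + 1) // ¬ IsLow t s} k)) π hπ hker
  rw [hlength, hd, ← hmul, Nat.mul_div_cancel _ (Finset.prod_pos fun i _ => Nat.factorial_pos _)]
end

section
/- Let k be a field and let t_1,…,t_r be nonnegative integers with t_1+⋯+t_r = m+1 and each t_i ≤ m+1. Set P = P(m;t_1,…,t_r). Then the images of g_0, g_1,…,g_m form a regular sequence on the localization R_P. -/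
/-- The list `l` is weakly regular on `A ⧸ I`, phrased through ideals of `A`: each entry is a
nonzerodivisor modulo `I` and the preceding entries. -/
def IsWeaklyRegularModulo {A : Type*} [CommRing A] : Ideal A → List A → Prop
  | _, [] => True
  | I, a :: l => (∀ x, a * x ∈ I → x ∈ I) ∧ IsWeaklyRegularModulo (I ⊔ Ideal.span {a}) l

namespace IsWeaklyRegularModulo

variable {A : Type*} [CommRing A]

theorem top (l : List A) : IsWeaklyRegularModulo ⊤ l := by
  induction l with
  | nil => trivial
  | cons a l ih => exact ⟨fun _ _ => trivial, by simpa using ih⟩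

theorem congr {I : Ideal A} {l l' : List A} (h : List.Forall₂ (fun x y => x - y ∈ I) l l')
    (hl : IsWeaklyRegularModulo I l) : IsWeaklyRegularModulo I l' := by
  induction l generalizing I l' with
  | nil => cases h; trivial
  | cons a l ih =>
    cases h with
    | @cons _ b _ l' hab hll =>
      refine ⟨fun x hx => hl.1 x ?_, ?_⟩
      · have := I.add_mem hx (I.mul_mem_right x hab)
        rwa [← add_mul, add_sub_cancel] at this
      · have hI : I ⊔ Ideal.span {b} = I ⊔ Ideal.span {a} := by
          apply le_antisymm <;> refine sup_le le_sup_left ?_ <;>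
            rw [Ideal.span_singleton_le_iff_mem]
          · simpa using sub_mem (Ideal.mem_sup_right (Ideal.mem_span_singleton_self a))
              (Ideal.mem_sup_left (T := Ideal.span {a}) hab)
          · simpa using add_mem (Ideal.mem_sup_left (T := Ideal.span {b}) hab)
              (Ideal.mem_sup_right (Ideal.mem_span_singleton_self b))
        rw [hI]
        exact ih (hll.imp fun _ _ hxy => Ideal.mem_sup_left hxy) hl.2

/-- Weak regularity passes from the two outer terms to the middle term of the short exact
sequence `0 → A ⧸ (J : a) → A ⧸ J → A ⧸ (J + (a)) → 0`. -/
theorem of_colon {J L K : Ideal A} {a : A} {l : List A} (hK : K = J ⊔ Ideal.span {a})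
    (hL : ∀ x, x ∈ L ↔ a * x ∈ J) (lL : IsWeaklyRegularModulo L l)
    (lK : IsWeaklyRegularModulo K l) : IsWeaklyRegularModulo J l := by
  induction l generalizing J L K with
  | nil => trivial
  | cons b l ih =>
    have mem_K : ∀ x, x ∈ K ↔ ∃ y, x - a * y ∈ J := fun x => by
      rw [hK, sup_comm, Ideal.mem_span_singleton_sup]
      constructor
      · rintro ⟨y, j, hj, rfl⟩
        exact ⟨y, by convert hj using 1; ring⟩
      · rintro ⟨y, hy⟩
        exact ⟨y, _, hy, by ring⟩
    refine ⟨fun x hx => ?_, ih ?_ (fun x => ?_) lL.2 lK.2⟩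
    · obtain ⟨y, hy⟩ := (mem_K x).1 (lK.1 x ((mem_K _).2 ⟨0, by simpa using hx⟩))
      have hay : a * y ∈ J := (hL y).1 <| lL.1 y <| (hL _).2 <| by
        convert J.sub_mem hx (J.mul_mem_left b hy) using 1; ring
      simpa using J.add_mem hy hay
    · rw [hK, sup_right_comm]
    · rw [sup_comm, Ideal.mem_span_singleton_sup, sup_comm, Ideal.mem_span_singleton_sup]
      constructor
      · rintro ⟨y, z, hz, rfl⟩
        exact ⟨a * y, a * z, (hL z).1 hz, by ring⟩
      · rintro ⟨y, j, hj, h⟩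
        obtain ⟨z, hz⟩ := (mem_K y).1 <| lK.1 y <| (mem_K _).2
          ⟨x, by convert J.neg_mem hj using 1; linear_combination h⟩
        refine ⟨z, x - z * b, (hL _).2 ?_, by ring⟩
        convert J.add_mem hj (J.mul_mem_left b hz) using 1
        linear_combination -h

theorem mul {I : Ideal A} {a b : A} {l : List A} (ha : ∀ x, a * x ∈ I → x ∈ I)
    (la : IsWeaklyRegularModulo (I ⊔ Ideal.span {a}) l)
    (lb : IsWeaklyRegularModulo (I ⊔ Ideal.span {b}) l) :
    IsWeaklyRegularModulo (I ⊔ Ideal.span {a * b}) l := by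
  refine of_colon (a := a) (K := I ⊔ Ideal.span {a}) ?_ (fun x => ?_) lb la
  · rw [sup_assoc, sup_eq_right.2 (Ideal.span_singleton_le_span_singleton.2 ⟨b, rfl⟩)]
  · rw [sup_comm, Ideal.mem_span_singleton_sup, sup_comm, Ideal.mem_span_singleton_sup]
    constructor
    · rintro ⟨y, z, hz, rfl⟩
      exact ⟨y, a * z, I.mul_mem_left a hz, by ring⟩
    · rintro ⟨y, j, hj, h⟩
      refine ⟨y, x - y * b, ha _ ?_, by ring⟩
      convert hj using 1
      linear_combination -h

theorem cons_prod {ι : Type*} {I : Ideal A} {l : List A} (s : Finset ι) (f : ι → A)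
    (h : ∀ i ∈ s, IsWeaklyRegularModulo I (f i :: l)) :
    IsWeaklyRegularModulo I ((∏ i ∈ s, f i) :: l) := by
  classical
  induction s using Finset.induction_on with
  | empty => exact ⟨by simp, by simpa using top l⟩
  | insert i s hi ih =>
    have hs := ih fun j hj => h j (Finset.mem_insert_of_mem hj)
    have hfi := h i (Finset.mem_insert_self i s)
    rw [Finset.prod_insert hi]
    exact ⟨fun x hx => hs.1 x (hfi.1 _ (by rwa [← mul_assoc])), mul hfi.1 hfi.2 hs.2⟩

theorem mem_of_mul_mem {I : Ideal A} {l : List A} (hl : IsWeaklyRegularModulo I l) (i : ℕ)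
    (hi : i < l.length) {x : A} (hx : l[i] * x ∈ I ⊔ Ideal.ofList (l.take i)) :
    x ∈ I ⊔ Ideal.ofList (l.take i) := by
  induction l generalizing I i with
  | nil => simp at hi
  | cons a l ih =>
    cases i with
    | zero => simpa using hl.1 x (by simpa using hx)
    | succ i =>
      simp only [List.take_succ_cons, Ideal.ofList_cons, List.getElem_cons_succ,
        ← sup_assoc] at hx ⊢
      exact ih hl.2 i (by simpa using hi) hx

theorem isWeaklyRegular {l : List A} (hl : IsWeaklyRegularModulo ⊥ l) :
    RingTheory.Sequence.IsWeaklyRegular A l := by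
  refine ⟨fun i hi => ?_⟩
  rw [isSMulRegular_iff_right_eq_zero_of_smul]
  intro x
  obtain ⟨x, rfl⟩ := Submodule.mkQ_surjective _ x
  intro hx
  rw [← map_smul] at hx
  simp only [Submodule.mkQ_apply, Submodule.Quotient.mk_eq_zero, smul_eq_mul,
    Ideal.mul_top] at hx ⊢
  simpa using hl.mem_of_mul_mem i hi (by simpa using hx)

end IsWeaklyRegularModulo

section PowerSeriesProduct

variable {A ι : Type*} [CommRing A]

/-- The ideal generated by the coefficients of index `< s i` of the `i`-th sequence `a i`. -/
def initialCoeffIdeal (a : ι → ℕ → A) (s : ι → ℕ) : Ideal A :=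
  Ideal.span {p | ∃ i j, j < s i ∧ p = a i j}

theorem initialCoeffIdeal_sup_span [DecidableEq ι] (a : ι → ℕ → A) (s : ι → ℕ) (i : ι) :
    initialCoeffIdeal a s ⊔ Ideal.span {a i (s i)} =
      initialCoeffIdeal a (Function.update s i (s i + 1)) := by
  rw [initialCoeffIdeal, initialCoeffIdeal, ← Ideal.span_union]
  congr 1
  ext p
  simp only [Set.mem_union, Set.mem_ofPred_eq, Set.mem_singleton_iff]
  constructor
  · rintro (⟨i', j, hj, rfl⟩ | rfl)
    · refine ⟨i', j, ?_, rfl⟩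
      by_cases h : i' = i
      · subst h; simpa using hj.trans (Nat.lt_succ_self _)
      · simpa [h] using hj
    · exact ⟨i, s i, by simp, rfl⟩
  · rintro ⟨i', j, hj, rfl⟩
    by_cases h : i' = i
    · subst h
      rw [Function.update_self, Nat.lt_succ_iff_lt_or_eq] at hj
      exact hj.imp (fun hj => ⟨i', j, hj, rfl⟩) (fun hj => by rw [hj])
    · exact Or.inl ⟨i', j, by simpa [h] using hj, rfl⟩

theorem coeff_prod_mem_initialCoeffIdeal [Fintype ι] (a : ι → ℕ → A) (s : ι → ℕ) {j : ℕ}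
    (hj : j < ∑ i, s i) :
    PowerSeries.coeff j (∏ i, PowerSeries.mk (a i)) ∈ initialCoeffIdeal a s := by
  classical
  rw [PowerSeries.coeff_prod]
  refine Ideal.sum_mem _ fun l hl => ?_
  rw [Finset.mem_finsuppAntidiag] at hl
  obtain ⟨i, -, hi⟩ := Finset.exists_lt_of_sum_lt (hl.1.trans_lt hj)
  refine Ideal.mem_of_dvd _ (Finset.dvd_prod_of_mem _ (Finset.mem_univ i)) ?_
  exact Ideal.subset_span ⟨i, l i, hi, by simp⟩

theorem mk_shift (f : ℕ → A) (k : ℕ) :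
    PowerSeries.mk (fun j => f (k + j)) =
      PowerSeries.C (f k) + PowerSeries.X * PowerSeries.mk (fun j => f (k + 1 + j)) := by
  ext j
  cases j with
  | zero => simp
  | succ j =>
    simp [PowerSeries.coeff_succ_X_mul, add_assoc, add_comm 1 j]

theorem coeff_succ_prod_shift_sub_mem [Fintype ι] [DecidableEq ι] (a : ι → ℕ → A) (s : ι → ℕ)
    (i : ι) (j : ℕ) :
    PowerSeries.coeff (j + 1) (∏ i', PowerSeries.mk fun j => a i' (s i' + j)) -
      PowerSeries.coeff j (∏ i', PowerSeries.mk fun j =>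
        a i' (Function.update s i (s i + 1) i' + j)) ∈ Ideal.span {a i (s i)} := by
  have h : ∀ i' ∈ Finset.univ.erase i,
      (PowerSeries.mk fun j => a i' (Function.update s i (s i + 1) i' + j)) =
        PowerSeries.mk fun j => a i' (s i' + j) := fun i' hi' => by
    rw [Function.update_of_ne (Finset.ne_of_mem_erase hi')]
  rw [← Finset.mul_prod_erase _ _ (Finset.mem_univ i),
    ← Finset.mul_prod_erase _ _ (Finset.mem_univ i), Finset.prod_congr rfl h, mk_shift (a i) (s i),
    Function.update_self, add_mul, mul_assoc, map_add, PowerSeries.coeff_succ_X_mul,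
    add_sub_cancel_right, PowerSeries.coeff_C_mul]
  exact Ideal.mul_mem_right _ _ (Ideal.mem_span_singleton_self _)

theorem isWeaklyRegularModulo_coeff_prod [Fintype ι] (a : ι → ℕ → A) (t : ι → ℕ)
    (hreg : ∀ s ≤ t, ∀ i, s i < t i → ∀ x,
      a i (s i) * x ∈ initialCoeffIdeal a s → x ∈ initialCoeffIdeal a s)
    (hunit : ∀ i, IsUnit (a i (t i))) (N : ℕ) (s : ι → ℕ) (hs : s ≤ t)
    (hN : ∑ i, t i = N + ∑ i, s i) :
    IsWeaklyRegularModulo (initialCoeffIdeal a s) ((List.range N).map fun j =>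
      PowerSeries.coeff j (∏ i, PowerSeries.mk fun j => a i (s i + j))) := by
  classical
  induction N generalizing s with
  | zero => trivial
  | succ N ih =>
    rw [List.range_succ_eq_map, List.map_cons, List.map_map,
      PowerSeries.coeff_zero_eq_constantCoeff, map_prod]
    refine IsWeaklyRegularModulo.cons_prod _ _ fun i _ => ?_
    have h0 : PowerSeries.constantCoeff (PowerSeries.mk fun j => a i (s i + j)) = a i (s i) := by
      simp
    rw [h0]
    rcases (hs i).lt_or_eq with hi | hi
    · refine ⟨hreg s hs i hi, ?_⟩
      rw [initialCoeffIdeal_sup_span]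
      refine .congr ?_ (ih (Function.update s i (s i + 1)) ?_ ?_)
      · rw [List.forall₂_map_left_iff, List.forall₂_map_right_iff, List.forall₂_same]
        intro j _
        rw [← neg_mem_iff, neg_sub, ← initialCoeffIdeal_sup_span]
        exact Ideal.mem_sup_right (coeff_succ_prod_shift_sub_mem a s i j)
      · exact update_le_iff.2 ⟨hi, fun j _ => hs j⟩
      · rw [Finset.sum_update_of_mem (Finset.mem_univ i), hN,
          ← Finset.add_sum_erase _ s (Finset.mem_univ i), Finset.sdiff_singleton_eq_erase]
        ring
    · have hu := hunit i
      rw [← hi] at hu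
      refine ⟨fun x hx => (Ideal.unit_mul_mem_iff_mem _ hu).1 hx, ?_⟩
      rw [Ideal.span_singleton_eq_top.2 hu, sup_top_eq]
      exact .top _

end PowerSeriesProduct

namespace MvPolynomial

variable {σ K : Type*} [CommRing K]

open Classical in
theorem ker_aeval_ite (S : Set σ) :
    RingHom.ker (aeval (R := K) fun v => if v ∈ S then (0 : MvPolynomial σ K) else X v) =
      Ideal.span (X '' S) := by
  refine le_antisymm (fun p hp => ?_) (Ideal.span_le.2 ?_)
  · have h : (Ideal.Quotient.mkₐ K (Ideal.span (X '' S))).comp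
        (aeval (R := K) fun v => if v ∈ S then (0 : MvPolynomial σ K) else X v) =
        Ideal.Quotient.mkₐ K (Ideal.span (X '' S)) := by
      ext v
      by_cases hv : v ∈ S
      · simpa [hv] using (Ideal.Quotient.eq_zero_iff_mem.2
          (Ideal.subset_span (Set.mem_image_of_mem X hv))).symm
      · simp [hv]
    have hp' := DFunLike.congr_fun h p
    rw [AlgHom.comp_apply, (RingHom.mem_ker).1 hp, map_zero] at hp'
    exact Ideal.Quotient.eq_zero_iff_mem.1 hp'.symm
  · rintro _ ⟨v, hv, rfl⟩
    simp [hv]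

theorem isPrime_span_X_image [IsDomain K] (S : Set σ) :
    (Ideal.span (X '' S : Set (MvPolynomial σ K))).IsPrime := by
  classical
  rw [← ker_aeval_ite]
  exact RingHom.ker_isPrime _

theorem X_mem_span_X_image_iff [Nontrivial K] {S : Set σ} {v : σ} :
    (X v : MvPolynomial σ K) ∈ Ideal.span (X '' S) ↔ v ∈ S := by
  refine ⟨fun h => ?_, fun h => Ideal.subset_span (Set.mem_image_of_mem X h)⟩
  obtain ⟨i, hi, hvi⟩ := mem_ideal_span_X_image.1 h (Finsupp.single v 1) (by simp [support_X])
  rw [Finsupp.single_apply_ne_zero] at hvi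
  rwa [← hvi.1]

end MvPolynomial

theorem IsLocalization.mem_map_of_mul_mem {R A : Type*} [CommRing R] [CommRing A] [Algebra R A]
    (M : Submonoid R) [IsLocalization M A] {I : Ideal R} (hI : I.IsPrime)
    (hM : Disjoint (M : Set R) I) {r : R} (hr : r ∉ I) {x : A}
    (hx : algebraMap R A r * x ∈ I.map (algebraMap R A)) : x ∈ I.map (algebraMap R A) := by
  refine ((isPrime_of_isPrime_disjoint M A I hI hM).mem_or_mem hx).resolve_left fun h => hr ?_
  rwa [← under_map_of_isPrime_disjoint M A hI hM]

section Jets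

variable (k : Type*) [Field k] (m n r : ℕ) (hrn : r ≤ n)

/-- The variables generating `compPrime k m n r hrn s`. -/
def initialVars (s : Fin r → ℕ) : Set (Fin n × Fin (m + 1)) :=
  {v | ∃ i j, j.val < s i ∧ v = (Fin.castLE hrn i, j)}

theorem compPrime_eq_span_X_image (s : Fin r → ℕ) :
    compPrime k m n r hrn s = Ideal.span (MvPolynomial.X '' initialVars m n r hrn s) := by
  rw [compPrime]
  congr 1
  ext p
  constructor
  · rintro ⟨i, j, hj, rfl⟩
    exact ⟨_, ⟨i, j, hj, rfl⟩, rfl⟩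
  · rintro ⟨_, ⟨i, j, hj, rfl⟩, rfl⟩
    exact ⟨i, j, hj, rfl⟩

theorem isPrime_compPrime (s : Fin r → ℕ) : (compPrime k m n r hrn s).IsPrime := by
  rw [compPrime_eq_span_X_image]
  exact MvPolynomial.isPrime_span_X_image _

theorem X_mem_compPrime_iff {s : Fin r → ℕ} {i : Fin r} {j : Fin (m + 1)} :
    (MvPolynomial.X (Fin.castLE hrn i, j) : JetRing k m n) ∈ compPrime k m n r hrn s ↔
      j.val < s i := by
  rw [compPrime_eq_span_X_image, MvPolynomial.X_mem_span_X_image_iff]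
  constructor
  · rintro ⟨i', j', hj, h⟩
    rw [Prod.mk.injEq, (Fin.castLE_injective hrn).eq_iff] at h
    rwa [h.1, h.2]
  · exact fun h => ⟨i, j, h, rfl⟩

theorem compPrime_mono {s t : Fin r → ℕ} (h : s ≤ t) :
    compPrime k m n r hrn s ≤ compPrime k m n r hrn t :=
  Ideal.span_mono fun _ ⟨i, j, hj, hp⟩ => ⟨i, j, hj.trans_le (h i), hp⟩

/-- The coefficient sequence of the `i`-th arc over a `JetRing`-algebra `A`, continued by `1` beyond
index `m`. -/
noncomputable def arcCoeff (A : Type*) [CommRing A] [Algebra (JetRing k m n) A] (i : Fin r)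
    (j : ℕ) : A :=
  if h : j < m + 1 then algebraMap (JetRing k m n) A (MvPolynomial.X (Fin.castLE hrn i, ⟨j, h⟩))
  else 1

variable {A : Type*} [CommRing A] [Algebra (JetRing k m n) A]

theorem algebraMap_jetGen {j : ℕ} (hj : j < m + 1) :
    algebraMap (JetRing k m n) A (jetGen k m n r hrn j) =
      PowerSeries.coeff j (∏ i, PowerSeries.mk (arcCoeff k m n r hrn A i)) := by
  rw [jetGen, ← Polynomial.coeff_coe, ← PowerSeries.coeff_map,
    ← Polynomial.coeToPowerSeries.ringHom_apply, map_prod, map_prod, PowerSeries.coeff_prod,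
    PowerSeries.coeff_prod]
  refine Finset.sum_congr rfl fun l hl => Finset.prod_congr rfl fun i _ => ?_
  rw [Finset.mem_finsuppAntidiag] at hl
  have hli : l i < m + 1 :=
    (Finset.single_le_sum (fun _ _ => Nat.zero_le _) (Finset.mem_univ i)).trans_lt
      (hl.1.trans_lt hj)
  rw [PowerSeries.coeff_map, Polynomial.coeToPowerSeries.ringHom_apply, Polynomial.coeff_coe,
    Polynomial.finsetSum_coeff, PowerSeries.coeff_mk, arcCoeff, dif_pos hli,
    Finset.sum_eq_single (⟨l i, hli⟩ : Fin (m + 1))]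
  · simp
  · intro b _ hb
    rw [Polynomial.coeff_C_mul_X_pow, if_neg fun h => hb (Fin.ext h.symm)]
  · simp

theorem initialCoeffIdeal_arcCoeff {s : Fin r → ℕ} (hs : ∀ i, s i ≤ m + 1) :
    initialCoeffIdeal (arcCoeff k m n r hrn A) s =
      (compPrime k m n r hrn s).map (algebraMap (JetRing k m n) A) := by
  rw [initialCoeffIdeal, compPrime, Ideal.map_span]
  congr 1
  ext p
  constructor
  · rintro ⟨i, j, hj, rfl⟩
    have hjm := hj.trans_le (hs i)
    exact ⟨_, ⟨i, ⟨j, hjm⟩, hj, rfl⟩, by rw [arcCoeff, dif_pos hjm]⟩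
  · rintro ⟨_, ⟨i, j, hj, rfl⟩, rfl⟩
    exact ⟨i, j, hj, by rw [arcCoeff, dif_pos j.2]⟩

end Jets

/-- If `t_1, …, t_r` are nonnegative integers with each `t_i ≤ m + 1` and
`t_1 + ⋯ + t_r = m + 1`, then the images of `g_0, g_1, …, g_m` form a regular sequence
on the localization `R_P` at `P = P(m; t_1, …, t_r)`. -/
theorem jetGens_isRegular_localization
    (k : Type*) [Field k]
    (m n r : ℕ) (hr : 1 ≤ r) (hrn : r ≤ n)
    (t : Fin r → ℕ) (ht : ∀ i, t i ≤ m + 1) (hsum : ∑ i, t i = m + 1)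
    [hP : (compPrime k m n r hrn t).IsPrime] :
    RingTheory.Sequence.IsRegular (Localization (compPrime k m n r hrn t).primeCompl)
      ((List.range (m + 1)).map fun j =>
        algebraMap (JetRing k m n) (Localization (compPrime k m n r hrn t).primeCompl)
          (jetGen k m n r hrn j)) := by
  set P := compPrime k m n r hrn t
  set A := Localization P.primeCompl
  let a := arcCoeff k m n r hrn A
  have hgen : ((List.range (m + 1)).map fun j =>
      algebraMap (JetRing k m n) A (jetGen k m n r hrn j)) =
      (List.range (m + 1)).map fun j => PowerSeries.coeff j (∏ i, PowerSeries.mk (a i)) :=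
    List.map_congr_left fun j hj => algebraMap_jetGen k m n r hrn (List.mem_range.1 hj)
  rw [hgen]
  have hbot : initialCoeffIdeal a 0 = ⊥ := by simp [initialCoeffIdeal]
  refine .of_isWeaklyRegular_of_mem_maximalIdeal _ (fun g hg => ?_)
    (IsWeaklyRegularModulo.isWeaklyRegular ?_)
  · obtain ⟨j, hj, rfl⟩ := List.mem_map.1 hg
    rw [List.mem_range, ← hsum] at hj
    rw [← Localization.AtPrime.map_eq_maximalIdeal, ← initialCoeffIdeal_arcCoeff k m n r hrn ht]
    exact coeff_prod_mem_initialCoeffIdeal a t hj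
  · rw [← hbot]
    have key := isWeaklyRegularModulo_coeff_prod a t (fun s hs i hi x hx => ?_) (fun i => ?_)
      (m + 1) 0 (fun i => Nat.zero_le _) (by simpa using hsum)
    · simpa using key
    · have him := hi.trans_le (ht i)
      rw [initialCoeffIdeal_arcCoeff k m n r hrn fun i => (hs i).trans (ht i)] at hx ⊢
      simp only [a, arcCoeff, dif_pos him] at hx
      refine IsLocalization.mem_map_of_mul_mem P.primeCompl (isPrime_compPrime k m n r hrn s)
        ?_ ?_ hx
      · exact Set.disjoint_left.2 fun p hp hps => hp (compPrime_mono k m n r hrn hs hps)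
      · simp [X_mem_compPrime_iff]
    · simp only [a, arcCoeff]
      split_ifs with h
      · exact IsLocalization.map_units A
          (⟨_, fun hX => lt_irrefl _ ((X_mem_compPrime_iff k m n r hrn).1 hX)⟩ : P.primeCompl)
      · exact isUnit_one
end

section
/- Let k be a field and let t_1,…,t_r be nonnegative integers with t_1+⋯+t_r = m+1; set P = P(m;t_1,…,t_r) and S = R_P/(g_1,…,g_m)R_P. Then g_0 = x_1^(0)x_2^(0)⋯x_r^(0) is a nonzerodivisor on S, and the image of each x_i^(0) for which t_i ≥ 1 is a nonunit of S. -/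
open RingTheory.Sequence in
/-- Weak regularity passes to the middle term of a short exact sequence. -/
theorem isWeaklyRegular_of_exact {A M₁ M₂ M₃ : Type*} [CommRing A] [AddCommGroup M₁]
    [AddCommGroup M₂] [AddCommGroup M₃] [Module A M₁] [Module A M₂] [Module A M₃]
    {f : M₁ →ₗ[A] M₂} {g : M₂ →ₗ[A] M₃} {rs : List A}
    (hf : Function.Injective f) (hfg : Function.Exact f g) (hg : Function.Surjective g)
    (h₁ : IsWeaklyRegular M₁ rs) (h₃ : IsWeaklyRegular M₃ rs) : IsWeaklyRegular M₂ rs := by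
  induction rs generalizing M₁ M₂ M₃ with
  | nil => simp
  | cons r rs ih =>
    rw [isWeaklyRegular_cons_iff] at h₁ h₃ ⊢
    refine ⟨isSMulRegular_of_range_eq_ker hf hfg.linearMap_ker_eq.symm h₁.1 h₃.1,
      ih (f := QuotSMulTop.map r f) (g := QuotSMulTop.map r g) ?_
        (QuotSMulTop.map_exact r hfg hg) (QuotSMulTop.map_surjective r hg) h₁.2 h₃.2⟩
    rw [injective_iff_map_eq_zero]
    intro x hx
    obtain ⟨x, rfl⟩ := Submodule.mkQ_surjective _ x
    rw [Submodule.mkQ_apply, QuotSMulTop.map_apply_mk, Submodule.Quotient.mk_eq_zero,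
      Submodule.mem_smul_pointwise_iff_exists] at hx
    obtain ⟨y, -, hy⟩ := hx
    have hgy : g y = 0 := h₃.1.right_eq_zero_of_smul <| by
      rw [← map_smul, hy, hfg.apply_apply_eq_zero]
    obtain ⟨z, rfl⟩ := (hfg y).mp hgy
    rw [Submodule.mkQ_apply, Submodule.Quotient.mk_eq_zero,
      Submodule.mem_smul_pointwise_iff_exists]
    exact ⟨z, trivial, hf (by rw [map_smul, hy])⟩

open RingTheory.Sequence in
theorem isWeaklyRegular_of_subsingleton {A M : Type*} [CommRing A] [AddCommGroup M] [Module A M]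
    [Subsingleton M] (rs : List A) : IsWeaklyRegular M rs := by
  induction rs generalizing M with
  | nil => simp
  | cons r rs ih =>
    have : Subsingleton (QuotSMulTop r M) := (Submodule.mkQ_surjective _).subsingleton
    exact .cons (fun _ _ _ => Subsingleton.elim _ _) ih

open RingTheory.Sequence in
theorem isWeaklyRegular_cons_of_isUnit {A M : Type*} [CommRing A] [AddCommGroup M] [Module A M]
    {r : A} (hr : IsUnit r) (rs : List A) : IsWeaklyRegular M (r :: rs) := by
  have : Subsingleton (QuotSMulTop r M) := by
    rw [Submodule.Quotient.subsingleton_iff, eq_top_iff]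
    rintro x -
    obtain ⟨u, rfl⟩ := hr
    exact (Submodule.mem_smul_pointwise_iff_exists _ _ _).mpr
      ⟨u⁻¹ • x, trivial, by rw [← Units.smul_def, smul_inv_smul]⟩
  exact .cons (hr.isSMulRegular M) (isWeaklyRegular_of_subsingleton rs)

open scoped Pointwise in
open RingTheory.Sequence in
theorem isWeaklyRegular_mul_cons {A M : Type*} [CommRing A] [AddCommGroup M] [Module A M]
    {a b : A} {rs : List A} (ha : IsWeaklyRegular M (a :: rs)) (hb : IsWeaklyRegular M (b :: rs)) :
    IsWeaklyRegular M (a * b :: rs) := by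
  rw [isWeaklyRegular_cons_iff] at ha hb
  refine .cons (ha.1.mul hb.1) ?_
  have hf : b • (⊤ : Submodule A M) ≤ ((a * b) • ⊤ : Submodule A M).comap
      (LinearMap.lsmul A M a) := by
    intro x hx
    obtain ⟨y, -, rfl⟩ := (Submodule.mem_smul_pointwise_iff_exists _ _ _).mp hx
    exact (Submodule.mem_smul_pointwise_iff_exists _ _ _).mpr ⟨y, trivial, mul_smul a b y⟩
  have hg : (a * b) • (⊤ : Submodule A M) ≤ a • ⊤ := by
    intro x hx
    obtain ⟨y, -, rfl⟩ := (Submodule.mem_smul_pointwise_iff_exists _ _ _).mp hx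
    exact (Submodule.mem_smul_pointwise_iff_exists _ _ _).mpr
      ⟨b • y, trivial, (mul_smul a b y).symm⟩
  refine isWeaklyRegular_of_exact (f := Submodule.mapQ _ _ _ hf) (g := Submodule.factor hg)
    ?_ ?_ (Submodule.factor_surjective hg) hb.2 ha.2
  · rw [injective_iff_map_eq_zero]
    intro x hx
    obtain ⟨x, rfl⟩ := Submodule.mkQ_surjective _ x
    rw [Submodule.mkQ_apply, Submodule.mapQ_apply, Submodule.Quotient.mk_eq_zero,
      Submodule.mem_smul_pointwise_iff_exists] at hx
    obtain ⟨y, -, hy⟩ := hx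
    rw [Submodule.mkQ_apply, Submodule.Quotient.mk_eq_zero,
      Submodule.mem_smul_pointwise_iff_exists]
    exact ⟨y, trivial, ha.1 (by simpa [mul_smul] using hy)⟩
  · intro x
    obtain ⟨x, rfl⟩ := Submodule.mkQ_surjective _ x
    rw [Submodule.factor, Submodule.mkQ_apply, Submodule.mapQ_apply, LinearMap.id_apply,
      Submodule.Quotient.mk_eq_zero,
      Submodule.mem_smul_pointwise_iff_exists]
    constructor
    · rintro ⟨y, -, rfl⟩
      exact ⟨Submodule.Quotient.mk y, rfl⟩
    · rintro ⟨y, hy⟩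
      obtain ⟨y, rfl⟩ := Submodule.mkQ_surjective _ y
      rw [Submodule.mkQ_apply, Submodule.mapQ_apply, eq_comm, Submodule.Quotient.eq,
        Submodule.mem_smul_pointwise_iff_exists] at hy
      obtain ⟨z, -, hz⟩ := hy
      refine ⟨y + b • z, trivial, ?_⟩
      rw [smul_add, ← mul_smul, hz, LinearMap.lsmul_apply, add_sub_cancel]

open RingTheory.Sequence in
theorem isWeaklyRegular_prod_cons {A M ι : Type*} [CommRing A] [AddCommGroup M] [Module A M]
    {a : ι → A} {rs : List A} (s : Finset ι) (h : ∀ i ∈ s, IsWeaklyRegular M (a i :: rs)) :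
    IsWeaklyRegular M ((∏ i ∈ s, a i) :: rs) := by
  classical
  induction s using Finset.induction_on with
  | empty => exact isWeaklyRegular_cons_of_isUnit (by simp) rs
  | insert i s hi ih =>
    rw [Finset.prod_insert hi]
    exact isWeaklyRegular_mul_cons (h i (Finset.mem_insert_self i s))
      (ih fun j hj => h j (Finset.mem_insert_of_mem hj))

/-- Raising the offset of the `i₀`-th factor strips its constant term and divides by `X`. -/
theorem exists_coeff_succ_prod_mk {A ι : Type*} [CommRing A] [Fintype ι] [DecidableEq ι]
    (a : ι → ℕ → A) (s : ι → ℕ) (i₀ : ι) (l : ℕ) :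
    ∃ q, PowerSeries.coeff (l + 1) (∏ i, PowerSeries.mk fun j => a i (s i + j)) =
      a i₀ (s i₀) * q + PowerSeries.coeff l
        (∏ i, PowerSeries.mk fun j => a i (Function.update s i₀ (s i₀ + 1) i + j)) := by
  set G := ∏ i ∈ Finset.univ.erase i₀, PowerSeries.mk fun j => a i (s i + j) with hG
  have hG' : ∏ i ∈ Finset.univ.erase i₀,
      (PowerSeries.mk fun j => a i (Function.update s i₀ (s i₀ + 1) i + j)) = G :=
    Finset.prod_congr rfl fun i hi => by
      rw [Function.update_of_ne (Finset.ne_of_mem_erase hi)]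
  have hF : (PowerSeries.mk fun j => a i₀ (s i₀ + j)) = PowerSeries.C (a i₀ (s i₀)) +
      PowerSeries.X * PowerSeries.mk fun j => a i₀ (s i₀ + 1 + j) := by
    ext (_ | j)
    · simp
    · simp [PowerSeries.coeff_succ_X_mul, add_assoc, add_comm 1]
  refine ⟨PowerSeries.coeff (l + 1) G, ?_⟩
  rw [← Finset.mul_prod_erase _ _ (Finset.mem_univ i₀),
    ← Finset.mul_prod_erase Finset.univ
      (fun i => PowerSeries.mk fun j => a i (Function.update s i₀ (s i₀ + 1) i + j))
      (Finset.mem_univ i₀), hG', ← hG, hF, add_mul, mul_assoc, map_add, PowerSeries.coeff_C_mul,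
    PowerSeries.coeff_succ_X_mul, Function.update_self]

open RingTheory.Sequence in
/-- If the `a i j` with `s i ≤ j < u i` form a weakly regular sequence in any order and the
`a i (u i)` are units, then the first `∑ i, (u i - s i)` coefficients of the product of the
power series `∑ j, a i (s i + j) X ^ j` form a weakly regular sequence. -/
theorem isWeaklyRegular_coeff_prod {A ι M : Type*} [CommRing A] [Fintype ι]
    [AddCommGroup M] [Module A M] (a : ι → ℕ → A) (u s : ι → ℕ) (N : ℕ)
    (hu : ∀ i, IsUnit (a i (u i))) (hs : ∀ i, s i ≤ u i) (hN : ∑ i, (u i - s i) = N)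
    (hreg : ∀ l : List (ι × ℕ), l.Nodup → (∀ v ∈ l, s v.1 ≤ v.2 ∧ v.2 < u v.1) →
      IsWeaklyRegular M (l.map fun v => a v.1 v.2)) :
    IsWeaklyRegular M ((List.range N).map fun l =>
      PowerSeries.coeff l (∏ i, PowerSeries.mk fun j => a i (s i + j))) := by
  classical
  induction N generalizing M s with
  | zero => simp
  | succ N ih =>
    have h0 : PowerSeries.coeff 0 (∏ i, PowerSeries.mk fun j => a i (s i + j)) =
        ∏ i, a i (s i) := by
      rw [PowerSeries.coeff_zero_eq_constantCoeff_apply, map_prod]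
      simp [← PowerSeries.coeff_zero_eq_constantCoeff_apply]
    rw [List.range_succ_eq_map, List.map_cons, List.map_map, h0]
    refine isWeaklyRegular_prod_cons _ fun i₀ _ => ?_
    obtain hi | hi := (hs i₀).eq_or_lt
    · exact isWeaklyRegular_cons_of_isUnit (hi ▸ hu i₀) _
    refine .cons ?_ ?_
    · simpa [isWeaklyRegular_singleton_iff] using hreg [(i₀, s i₀)] (by simp) (by simpa using hi)
    have key := ih (M := QuotSMulTop (a i₀ (s i₀)) M) (Function.update s i₀ (s i₀ + 1)) ?_ ?_ ?_
    · refine ((AddEquiv.refl (QuotSMulTop (a i₀ (s i₀)) M)).isWeaklyRegular_congr ?_).mp key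
      rw [List.forall₂_map_left_iff, List.forall₂_map_right_iff, List.forall₂_same]
      intro l _ x
      obtain ⟨q, hq⟩ := exists_coeff_succ_prod_mk a s i₀ l
      simp only [AddEquiv.refl_apply, Function.comp_apply, Nat.succ_eq_add_one]
      rw [hq, add_smul, mul_smul]
      obtain ⟨x, rfl⟩ := Submodule.mkQ_surjective _ x
      rw [right_eq_add, ← map_smul, ← map_smul, Submodule.mkQ_apply, Submodule.Quotient.mk_eq_zero]
      exact Submodule.smul_mem_pointwise_smul _ _ _ trivial
    · intro i
      obtain rfl | h := eq_or_ne i i₀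
      · simpa using hi
      · simpa [h] using hs i
    · rw [← Finset.add_sum_erase _ _ (Finset.mem_univ i₀)] at hN ⊢
      rw [Finset.sum_congr rfl fun i hi => by
        rw [Function.update_of_ne (Finset.ne_of_mem_erase hi)], Function.update_self]
      omega
    · intro l hl hmem
      have hle : ∀ v ∈ l, s v.1 ≤ v.2 ∧ v.2 < u v.1 ∧ v ≠ (i₀, s i₀) := by
        intro v hv
        obtain ⟨i, j⟩ := v
        have := hmem _ hv
        obtain rfl | h := eq_or_ne i i₀
        · simp only [Function.update_self] at this
          simp only [ne_eq, Prod.mk.injEq, true_and]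
          omega
        · simp only [Function.update_of_ne h] at this
          simp [h, this]
      have := hreg ((i₀, s i₀) :: l)
        (List.nodup_cons.mpr ⟨fun h => (hle _ h).2.2 rfl, hl⟩) (by
          rintro v (_ | ⟨_, hv⟩)
          · exact ⟨le_rfl, hi⟩
          · exact ⟨(hle v hv).1, (hle v hv).2.1⟩)
      rw [List.map_cons, isWeaklyRegular_cons_iff] at this
      exact this.2

open RingTheory.Sequence in
theorem MvPolynomial.isWeaklyRegular_map_X {σ A : Type*} [CommRing A] {l : List σ}
    (hl : l.Nodup) : IsWeaklyRegular (MvPolynomial σ A) (l.map (X (R := A))) := by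
  induction l using List.reverseRecOn with
  | nil => simp
  | append_singleton l v ih =>
    rw [List.map_append, isWeaklyRegular_append_iff]
    rw [List.nodup_append] at hl
    refine ⟨ih hl.1, ?_⟩
    have hspan : (Ideal.ofList (l.map (X (R := A))) • ⊤ : Ideal (MvPolynomial σ A)) =
        Ideal.span (X '' {w | w ∈ l}) := by
      rw [Ideal.smul_eq_mul, Ideal.mul_top, Ideal.ofList]
      congr 1
      ext
      simp
    rw [List.map_singleton, isWeaklyRegular_singleton_iff,
      isSMulRegular_quotient_iff_mem_of_smul_mem, hspan]
    intro p hp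
    rw [smul_eq_mul, mul_comm, mem_ideal_span_X_image] at hp
    rw [mem_ideal_span_X_image]
    intro d hd
    obtain ⟨w, hw, h⟩ := hp (d + Finsupp.single v 1) (by
      rw [mem_support_iff] at hd ⊢
      rwa [coeff_mul_X])
    have hwv : v ≠ w := fun e => hl.2.2 w hw v (by simp) e.symm
    exact ⟨w, hw, by simpa [Finsupp.single_apply, hwv] using h⟩

/-- The coefficient of `X ^ j` in the `i`-th jet series: a variable of `JetRing` for `j ≤ m`,
and `1` for `j > m`. -/
noncomputable def jetCoeff (k : Type*) [Field k] (m n r : ℕ) (hrn : r ≤ n) (i : Fin r) (j : ℕ) :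
    JetRing k m n :=
  if h : j < m + 1 then MvPolynomial.X (Fin.castLE hrn i, ⟨j, h⟩) else 1

theorem coeff_sum_C_mul_X_pow {A : Type*} [Semiring A] {m : ℕ} (c : Fin (m + 1) → A) (j : ℕ) :
    (∑ l : Fin (m + 1), Polynomial.C (c l) * Polynomial.X ^ (l : ℕ)).coeff j =
      if h : j < m + 1 then c ⟨j, h⟩ else 0 := by
  simp only [Polynomial.finsetSum_coeff, Polynomial.coeff_C_mul_X_pow]
  split_ifs with h
  · rw [Finset.sum_eq_single ⟨j, h⟩] <;> simp +contextual [Fin.ext_iff, eq_comm]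
  · exact Finset.sum_eq_zero fun l _ => if_neg (by omega)

theorem coeff_prod_jetCoeff (k : Type*) [Field k] (m n r : ℕ) (hrn : r ≤ n) {l : ℕ} (hl : l ≤ m) :
    PowerSeries.coeff l (∏ i, PowerSeries.mk (jetCoeff k m n r hrn i)) =
      jetGen k m n r hrn l := by
  set p : Fin r → Polynomial (JetRing k m n) := fun i => ∑ l : Fin (m + 1),
    Polynomial.C (MvPolynomial.X (Fin.castLE hrn i, l)) * Polynomial.X ^ (l : ℕ) with hp
  have hdvd : (PowerSeries.X ^ (m + 1) : PowerSeries (JetRing k m n)) ∣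
      (∏ i, PowerSeries.mk (jetCoeff k m n r hrn i)) - ∏ i, (p i : PowerSeries (JetRing k m n)) := by
    rw [← Ideal.mem_span_singleton, ← Ideal.Quotient.eq, map_prod, map_prod]
    refine Finset.prod_congr rfl fun i _ => ?_
    rw [Ideal.Quotient.eq, Ideal.mem_span_singleton, PowerSeries.X_pow_dvd_iff]
    intro j hj
    rw [map_sub, PowerSeries.coeff_mk, Polynomial.coeff_coe, coeff_sum_C_mul_X_pow, jetCoeff,
      dif_pos hj, dif_pos hj, sub_self]
  have h := PowerSeries.X_pow_dvd_iff.mp hdvd l (by omega)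
  rw [map_sub, sub_eq_zero] at h
  rw [h, jetGen, ← Polynomial.coeff_coe]
  exact congrArg _ (map_prod Polynomial.coeToPowerSeries.ringHom p Finset.univ).symm

theorem Polynomial.coeff_prod_eq_zero_of_lt_sum {A ι : Type*} [CommRing A] [Fintype ι]
    (p : ι → Polynomial A) (t : ι → ℕ) (hp : ∀ i, ∀ j < t i, (p i).coeff j = 0) {l : ℕ}
    (hl : l < ∑ i, t i) : (∏ i, p i).coeff l = 0 := by
  refine X_pow_dvd_iff.mp ?_ l hl
  rw [← Finset.prod_pow_eq_pow_sum]
  exact Finset.prod_dvd_prod_of_dvd _ _ fun i _ => X_pow_dvd_iff.mpr (hp i)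

theorem Polynomial.coeff_prod_mem_of_lt_sum {A ι : Type*} [CommRing A] [Fintype ι] (I : Ideal A)
    (p : ι → Polynomial A) (t : ι → ℕ) (hp : ∀ i, ∀ j < t i, (p i).coeff j ∈ I) {l : ℕ}
    (hl : l < ∑ i, t i) : (∏ i, p i).coeff l ∈ I := by
  rw [← Ideal.Quotient.eq_zero_iff_mem, ← coeff_map, Polynomial.map_prod]
  refine coeff_prod_eq_zero_of_lt_sum _ t (fun i j hj => ?_) hl
  rw [coeff_map, Ideal.Quotient.eq_zero_iff_mem]
  exact hp i j hj

theorem jetGen_mem_compPrime (k : Type*) [Field k] (m n r : ℕ) (hrn : r ≤ n) (t : Fin r → ℕ)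
    {l : ℕ} (hl : l < ∑ i, t i) : jetGen k m n r hrn l ∈ compPrime k m n r hrn t := by
  refine Polynomial.coeff_prod_mem_of_lt_sum _ _ t (fun i j hj => ?_) hl
  rw [coeff_sum_C_mul_X_pow]
  split_ifs with h
  · exact Ideal.subset_span ⟨i, ⟨j, h⟩, hj, rfl⟩
  · exact zero_mem _

theorem X_notMem_compPrime (k : Type*) [Field k] (m n r : ℕ) (hrn : r ≤ n) (t : Fin r → ℕ)
    (i : Fin r) (j : Fin (m + 1)) (hj : t i ≤ j) :
    MvPolynomial.X (Fin.castLE hrn i, j) ∉ compPrime k m n r hrn t := by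
  have hset : {p | ∃ (i : Fin r) (j : Fin (m + 1)), (j : ℕ) < t i ∧
      p = (MvPolynomial.X (Fin.castLE hrn i, j) : JetRing k m n)} =
      MvPolynomial.X '' {v | ∃ (i : Fin r) (j : Fin (m + 1)), (j : ℕ) < t i ∧
        v = (Fin.castLE hrn i, j)} := by
    ext p
    constructor
    · rintro ⟨i, j, h, rfl⟩
      exact ⟨_, ⟨i, j, h, rfl⟩, rfl⟩
    · rintro ⟨_, ⟨i, j, h, rfl⟩, rfl⟩
      exact ⟨i, j, h, rfl⟩
  rw [compPrime, hset, MvPolynomial.mem_ideal_span_X_image]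
  intro h
  obtain ⟨_, ⟨i', j', hj', rfl⟩, h⟩ := h (Finsupp.single (Fin.castLE hrn i, j) 1)
    (by simp [MvPolynomial.X])
  rw [Finsupp.single_apply_ne_zero] at h
  obtain ⟨h1, h2⟩ := Prod.mk.inj h.1
  obtain rfl := Fin.castLE_injective hrn h1
  subst h2
  omega

open RingTheory.Sequence in
theorem isWeaklyRegular_jetGen_localization (k : Type*) [Field k] (m n r : ℕ) (hrn : r ≤ n)
    (t : Fin r → ℕ) (hsum : ∑ i, t i = m + 1) [hP : (compPrime k m n r hrn t).IsPrime] :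
    IsWeaklyRegular (Localization (compPrime k m n r hrn t).primeCompl)
      ((List.range (m + 1)).map fun l =>
        algebraMap (JetRing k m n) (Localization (compPrime k m n r hrn t).primeCompl)
          (jetGen k m n r hrn l)) := by
  set φ := algebraMap (JetRing k m n) (Localization (compPrime k m n r hrn t).primeCompl) with hφ
  have ht : ∀ i, t i ≤ m + 1 := fun i =>
    hsum ▸ Finset.single_le_sum (fun _ _ => Nat.zero_le _) (Finset.mem_univ i)
  have key := isWeaklyRegular_coeff_prod
    (M := Localization (compPrime k m n r hrn t).primeCompl)
    (fun i j => φ (jetCoeff k m n r hrn i j)) t (fun _ => 0) (m + 1) ?_ (fun _ => Nat.zero_le _)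
    (by simpa using hsum) ?_
  · convert key using 1
    refine List.map_congr_left fun l hl => ?_
    rw [← coeff_prod_jetCoeff k m n r hrn (Nat.lt_succ_iff.mp (List.mem_range.mp hl)),
      ← PowerSeries.coeff_map, map_prod]
    congr 1
    refine Finset.prod_congr rfl fun i _ => ?_
    ext j
    simp
  · intro i
    unfold jetCoeff
    split_ifs with h
    · exact IsLocalization.map_units _ (⟨_, X_notMem_compPrime k m n r hrn t i ⟨t i, h⟩ le_rfl⟩ :
        (compPrime k m n r hrn t).primeCompl)
    · simp
  · intro l hl hmem
    have hX := (MvPolynomial.isWeaklyRegular_map_X (A := k)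
      (l := l.map fun v => (Fin.castLE hrn v.1, Fin.ofNat (m + 1) v.2)) ?_).of_isLocalization
        (Localization (compPrime k m n r hrn t).primeCompl)
        (compPrime k m n r hrn t).primeCompl
    · rw [List.map_map, List.map_map] at hX
      refine (congrArg (IsWeaklyRegular _) (List.map_congr_left fun v hv => ?_)).mpr hX
      have hv' : v.2 < m + 1 := (hmem v hv).2.trans_le (ht _)
      simp only [jetCoeff, hv', dif_pos, Function.comp_apply, hφ]
      congr 3
      simp [Fin.ext_iff, Nat.mod_eq_of_lt hv']
    · refine hl.map_on fun v hv w hw h => ?_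
      have hv' : v.2 < m + 1 := (hmem v hv).2.trans_le (ht _)
      have hw' : w.2 < m + 1 := (hmem w hw).2.trans_le (ht _)
      obtain ⟨h1, h2⟩ := Prod.mk.inj h
      refine Prod.ext (Fin.castLE_injective hrn h1) ?_
      simpa [Fin.ext_iff, Nat.mod_eq_of_lt hv', Nat.mod_eq_of_lt hw'] using h2

open RingTheory.Sequence in
/-- In a Noetherian local ring, the head of a weakly regular sequence in the maximal ideal is a
nonzerodivisor modulo the tail. -/
theorem IsLocalRing.mk_mem_nonZeroDivisors_of_isWeaklyRegular_cons {A : Type*} [CommRing A]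
    [IsLocalRing A] [IsNoetherianRing A] {x : A} {rs : List A} {I : Ideal A}
    (hI : I = Ideal.ofList rs) (h : IsWeaklyRegular A (x :: rs))
    (hmem : ∀ a ∈ x :: rs, a ∈ maximalIdeal A) :
    Ideal.Quotient.mk I x ∈ nonZeroDivisors (A ⧸ I) := by
  have h' := isWeaklyRegular_of_perm_of_subset_maximalIdeal h
    (List.perm_append_singleton x rs).symm hmem
  rw [isWeaklyRegular_append_iff, isWeaklyRegular_singleton_iff,
    isSMulRegular_quotient_iff_mem_of_smul_mem, Ideal.smul_eq_mul, Ideal.mul_top, ← hI] at h'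
  rw [mem_nonZeroDivisors_iff_right]
  intro y hy
  obtain ⟨y, rfl⟩ := Ideal.Quotient.mk_surjective y
  rw [← map_mul, Ideal.Quotient.eq_zero_iff_mem] at hy
  exact Ideal.Quotient.eq_zero_iff_mem.mpr (h'.2 y (by rwa [smul_eq_mul, mul_comm]))

theorem IsLocalRing.not_isUnit_mk {A : Type*} [CommRing A] [IsLocalRing A] {I : Ideal A} {x : A}
    (hI : I ≤ maximalIdeal A) (hx : x ∈ maximalIdeal A) : ¬ IsUnit (Ideal.Quotient.mk I x) := by
  intro h
  have h1 := h.map (Ideal.Quotient.factor hI)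
  rw [Ideal.Quotient.factor_mk, Ideal.Quotient.eq_zero_iff_mem.mpr hx] at h1
  exact not_isUnit_zero h1

set_option synthInstance.maxHeartbeats 1000000 in
set_option maxHeartbeats 1000000 in
/-- Let `t_1, …, t_r` be nonnegative integers with `t_1 + ⋯ + t_r = m + 1`, let
`P = P(m; t_1, …, t_r)` and `S = R_P/(g_1, …, g_m)R_P`.  Then the image of
`g_0 = x_1^(0) ⋯ x_r^(0)` is a nonzerodivisor on `S`, and for each `i` with `t_i ≥ 1`
the image of `x_i^(0)` in `S` is a nonunit. -/
theorem g0_nonZeroDivisor_and_variables_nonunit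
    (k : Type*) [Field k]
    (m n r : ℕ) (hr : 1 ≤ r) (hrn : r ≤ n)
    (t : Fin r → ℕ) (hsum : ∑ i, t i = m + 1)
    [hP : (compPrime k m n r hrn t).IsPrime] :
    (Ideal.Quotient.mk
        (Ideal.map
          (algebraMap (JetRing k m n) (Localization (compPrime k m n r hrn t).primeCompl))
          (Ideal.span (jetGen k m n r hrn '' Set.Icc 1 m)))
        (algebraMap (JetRing k m n) (Localization (compPrime k m n r hrn t).primeCompl)
          (jetGen k m n r hrn 0)) ∈
      nonZeroDivisors
        (Localization (compPrime k m n r hrn t).primeCompl ⧸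
          Ideal.map
            (algebraMap (JetRing k m n) (Localization (compPrime k m n r hrn t).primeCompl))
            (Ideal.span (jetGen k m n r hrn '' Set.Icc 1 m)))) ∧
    ∀ i : Fin r, 1 ≤ t i →
      ¬ IsUnit
        (Ideal.Quotient.mk
          (Ideal.map
            (algebraMap (JetRing k m n) (Localization (compPrime k m n r hrn t).primeCompl))
            (Ideal.span (jetGen k m n r hrn '' Set.Icc 1 m)))
          (algebraMap (JetRing k m n) (Localization (compPrime k m n r hrn t).primeCompl)
            (MvPolynomial.X (Fin.castLE hrn i, (0 : Fin (m + 1)))))) := by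
  have hloc : IsLocalRing (Localization (compPrime k m n r hrn t).primeCompl) :=
    inferInstanceAs (IsLocalRing (Localization.AtPrime (compPrime k m n r hrn t)))
  have hnoeth : IsNoetherianRing (Localization (compPrime k m n r hrn t).primeCompl) :=
    IsLocalization.isNoetherianRing (compPrime k m n r hrn t).primeCompl _ inferInstance
  have hmax : ∀ {x}, x ∈ compPrime k m n r hrn t →
      algebraMap (JetRing k m n) (Localization (compPrime k m n r hrn t).primeCompl) x ∈
        IsLocalRing.maximalIdeal (Localization (compPrime k m n r hrn t).primeCompl) := fun hx =>
    (IsLocalization.AtPrime.to_map_mem_maximal_iff _ (compPrime k m n r hrn t) _).mpr hx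
  have hgen : ∀ l ≤ m, jetGen k m n r hrn l ∈ compPrime k m n r hrn t := fun l hl =>
    jetGen_mem_compPrime k m n r hrn t (by omega)
  have hreg := isWeaklyRegular_jetGen_localization k m n r hrn t hsum
  rw [List.range_succ_eq_map, List.map_cons, List.map_map] at hreg
  refine ⟨IsLocalRing.mk_mem_nonZeroDivisors_of_isWeaklyRegular_cons ?_ hreg ?_,
    fun i hi => IsLocalRing.not_isUnit_mk ?_ (hmax ?_)⟩
  · rw [Ideal.map_span, Ideal.ofList]
    congr 1
    ext x
    simp only [Set.mem_image, exists_exists_and_eq_and, Set.mem_Icc, List.mem_map, List.mem_range,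
      Set.mem_ofPred_eq, Function.comp_apply]
    constructor
    · rintro ⟨l, hl, rfl⟩
      exact ⟨l - 1, by omega, by rw [Nat.succ_eq_add_one, Nat.sub_add_cancel hl.1]⟩
    · rintro ⟨l, hl, rfl⟩
      exact ⟨l + 1, by omega, rfl⟩
  · simp only [List.forall_mem_cons, List.forall_mem_map, List.mem_range]
    exact ⟨hmax (hgen 0 (Nat.zero_le _)), fun l hl => hmax (hgen _ hl)⟩
  · rw [Ideal.map_span, Ideal.span_le]
    rintro _ ⟨_, ⟨l, hl, rfl⟩, rfl⟩
    exact hmax (hgen l hl.2)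
  · exact Ideal.subset_span ⟨i, 0, Nat.lt_of_succ_le hi, rfl⟩
end
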